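/- arXiv:2410.23270 — 6 statements merged into one kernel-verified Lean document; each statement's English description precedes it below -/
import Mathlib

section
/- Let M = (X, P, π) be a reversible finite Markov chain satisfying a Poincaré inequality with constant δ > 0. Then for every unit vector ψ ∈ ℝ^X, (1 − ⟨ψ| D(P) |ψ⟩)/δ ≥ TV(ψ², π)², where ψ² is the distribution with ψ²(x) = ψ(x)² and TV(μ,ν) = (1/2)·Σ_x |μ(x) − ν(x)| is the total variation distance. -/
open Matrix Finset

noncomputable section

variable {X : Type*} [Fintype X] [DecidableEq X]

/-- A finite Markov chain: a row-stochastic matrix `P` together with a fully supported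
stationary distribution `π`. -/
structure IsMarkov (P : Matrix X X ℝ) (π : X → ℝ) : Prop where
  nonneg : ∀ x y, 0 ≤ P x y
  rowSum : ∀ x, ∑ y, P x y = 1
  pi_pos : ∀ x, 0 < π x
  pi_sum : ∑ x, π x = 1
  stationary : ∀ y, ∑ x, π x * P x y = π y

/-- Detailed balance / reversibility. -/
def IsReversible (P : Matrix X X ℝ) (π : X → ℝ) : Prop :=
  ∀ x y, π x * P x y = π y * P y x

/-- The discriminant matrix `D(P)_{xy} = sqrt (π x / π y) * P x y`. -/
def discMat (P : Matrix X X ℝ) (π : X → ℝ) : Matrix X X ℝ :=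
  Matrix.of fun x y => Real.sqrt (π x / π y) * P x y

/-- The vector with entries `sqrt (π x)`. -/
def sqrtVec (π : X → ℝ) : X → ℝ := fun x => Real.sqrt (π x)

/-- `g_η (x) = min 0 ((x + 1 - η)/η)`. -/
def gEta (η x : ℝ) : ℝ := min 0 ((x + 1 - η) / η)

/-- `f (x) = - g_η (-x)`. -/
def fEta (η x : ℝ) : ℝ := -gEta η (-x)

/-- The diagonal matrix `G_η` with entries `g_η (H z / |E*|)`. -/
def GEtaMat (η : ℝ) (H : X → ℝ) (Estar : ℝ) : Matrix X X ℝ :=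
  Matrix.diagonal fun z => gEta η (H z / |Estar|)

/-- The short-path Hamiltonian `H_b = -D(P) + b • G_η`. -/
def shortPathHam (P : Matrix X X ℝ) (π : X → ℝ) (b η : ℝ) (H : X → ℝ) (Estar : ℝ) :
    Matrix X X ℝ :=
  -discMat P π + b • GEtaMat η H Estar

/-- The projector `Π_⊥ = 1 - |√π⟩⟨√π|`. -/
def projPerp (π : X → ℝ) : Matrix X X ℝ :=
  1 - Matrix.vecMulVec (sqrtVec π) (sqrtVec π)

/-- `π(E*)`: the stationary mass of the set of global minimisers of `H`. -/
def piStar (π H : X → ℝ) (Estar : ℝ) : ℝ :=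
  ∑ x, Set.indicator {y | H y = Estar} π x

/-- The stationary mass of the sublevel set `{H ≤ t}`. -/
def massLE (π H : X → ℝ) (t : ℝ) : ℝ :=
  ∑ x, Set.indicator {y | H y ≤ t} π x

/-- The Dirichlet form `D(f,f) = ⟨f, (I - P) f⟩_π`. -/
def dirichletForm (P : Matrix X X ℝ) (π f : X → ℝ) : ℝ :=
  ∑ x, π x * (f x * (f x - P.mulVec f x))

/-- `Ent_π (f) = E_π[f ln f] - E_π[f] ln (E_π[f])`. -/
def entPi (π f : X → ℝ) : ℝ :=
  (∑ x, π x * (f x * Real.log (f x))) - (∑ x, π x * f x) * Real.log (∑ x, π x * f x)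

/-- `Var_π (f) = E_π[f²] - (E_π[f])²`. -/
def varPi (π f : X → ℝ) : ℝ :=
  (∑ x, π x * f x ^ 2) - (∑ x, π x * f x) ^ 2

/-- Log-Sobolev inequality with constant `ω`. -/
def LogSobolev (P : Matrix X X ℝ) (π : X → ℝ) (ω : ℝ) : Prop :=
  ∀ f : X → ℝ, ω * entPi π (fun x => f x ^ 2) ≤ dirichletForm P π f

/-- Poincaré inequality with constant `δ`. -/
def Poincare (P : Matrix X X ℝ) (π : X → ℝ) (δ : ℝ) : Prop :=
  ∀ f : X → ℝ, δ * varPi π f ≤ dirichletForm P π f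

/-- Kullback–Leibler divergence of finitely supported densities. -/
def klDiv (μ ν : X → ℝ) : ℝ := ∑ x, μ x * Real.log (μ x / ν x)

/-- Total variation distance of finitely supported densities. -/
def tvDist (μ ν : X → ℝ) : ℝ := (∑ x, |μ x - ν x|) / 2

/-- The `θ` short-path condition at `b`: the smallest eigenvalue of `Π_⊥ H_b Π_⊥` is
at least `-1 + θ`, expressed via the Rayleigh quotient. -/
def ShortPathCond (P : Matrix X X ℝ) (π : X → ℝ) (b η : ℝ) (H : X → ℝ) (Estar θ : ℝ) :
    Prop :=
  ∀ v : X → ℝ,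
    (-1 + θ) * (∑ x, v x * v x) ≤
      ∑ x, v x * (projPerp π * shortPathHam P π b η H Estar * projPerp π).mulVec v x

/-- `Δ`-stability of the cost function `H` under the chain `P`. -/
def DeltaStable (P : Matrix X X ℝ) (H : X → ℝ) (Estar η Δ : ℝ) : Prop :=
  ∀ x, ∑ y, P x y * gEta η (H y / |Estar|) ≤ gEta η ((H x + Δ) / |Estar|)

/-- The `α`-subdepolarizing property of the pair `(P, H)`. -/
def Subdepolarizing (P : Matrix X X ℝ) (H : X → ℝ) (Estar η α : ℝ) : Prop :=
  ∀ (T : ℕ) (c : Fin T → ℝ), (∀ t, c t ∈ Set.Ioo (0:ℝ) 1) →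
    ∀ x, (∏ t, fEta η (c t * (1 - α) * H x / Estar)) ≤
      ∑ y, P x y * ∏ t, fEta η (c t * H y / Estar)

/-- The `P`-pseudo-Lipschitz norm `‖H‖_P = max_x Σ_y P x y (H x - H y)²`. -/
def pseudoLipNorm [Nonempty X] (P : Matrix X X ℝ) (H : X → ℝ) : ℝ :=
  univ.sup' univ_nonempty fun x => ∑ y, P x y * (H x - H y) ^ 2

/-!
Put `u = √π`. The substitution `ψ = u f` turns `⟨ψ, (1 - D(P)) ψ⟩` into the Dirichlet form of `f`
and `‖ψ‖² - ⟨ψ, u⟩²` into its variance, so that the Poincaré inequality bounds `δ (1 - ⟨ψ, u⟩²)`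
for unit `ψ`. On the other hand `|ψ² - u²| = |ψ - u| |ψ + u|`, and Cauchy–Schwarz gives
`TV(ψ², u²)² ≤ 1 - ⟨ψ, u⟩²`.
-/

theorem sq_sum_abs_sq_sub_sq_le {ι R : Type*} [CommRing R] [LinearOrder R] [IsStrictOrderedRing R]
    (s : Finset ι) (u v : ι → R) :
    (∑ i ∈ s, |u i ^ 2 - v i ^ 2|) ^ 2 ≤
      (∑ i ∈ s, u i ^ 2 + ∑ i ∈ s, v i ^ 2) ^ 2 - (2 * ∑ i ∈ s, u i * v i) ^ 2 := by
  have sum_add_sq : ∑ i ∈ s, (u i + v i) ^ 2 =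
      (∑ i ∈ s, u i ^ 2 + ∑ i ∈ s, v i ^ 2) + 2 * ∑ i ∈ s, u i * v i := by
    simp only [mul_sum, ← sum_add_distrib]
    exact sum_congr rfl fun i _ => by ring
  have sum_sub_sq : ∑ i ∈ s, (u i - v i) ^ 2 =
      (∑ i ∈ s, u i ^ 2 + ∑ i ∈ s, v i ^ 2) - 2 * ∑ i ∈ s, u i * v i := by
    simp only [mul_sum, ← sum_add_distrib, ← sum_sub_distrib]
    exact sum_congr rfl fun i _ => by ring
  calc (∑ i ∈ s, |u i ^ 2 - v i ^ 2|) ^ 2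
      = (∑ i ∈ s, |u i + v i| * |u i - v i|) ^ 2 := by simp only [sq_sub_sq, abs_mul]
    _ ≤ (∑ i ∈ s, |u i + v i| ^ 2) * ∑ i ∈ s, |u i - v i| ^ 2 := sum_mul_sq_le_sq_mul_sq ..
    _ = _ := by simp only [sq_abs, sum_add_sq, sum_sub_sq, ← sq_sub_sq]

section

variable {ι : Type*} {π : ι → ℝ}

theorem sqrtVec_pos {x : ι} : 0 < sqrtVec π x ↔ 0 < π x :=
  Real.sqrt_pos

theorem sq_sqrtVec {x : ι} (hx : 0 ≤ π x) : sqrtVec π x ^ 2 = π x :=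
  Real.sq_sqrt hx

variable [Fintype ι]

theorem sq_tvDist_sq_le (u v : ι → ℝ) :
    tvDist (fun i => u i ^ 2) (fun i => v i ^ 2) ^ 2 ≤
      ((u ⬝ᵥ u + v ⬝ᵥ v) / 2) ^ 2 - (u ⬝ᵥ v) ^ 2 := by
  have cauchy_schwarz := sq_sum_abs_sq_sub_sq_le univ u v
  simp only [tvDist, dotProduct, ← sq]
  linarith

theorem sqrtVec_dotProduct_self (hπ : ∀ x, 0 ≤ π x) : sqrtVec π ⬝ᵥ sqrtVec π = ∑ x, π x :=
  sum_congr rfl fun x _ => Real.mul_self_sqrt (hπ x)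

theorem discMat_mulVec (P : Matrix ι ι ℝ) (hπ : ∀ x, 0 ≤ π x) (ψ : ι → ℝ) :
    discMat P π *ᵥ ψ = sqrtVec π * (P *ᵥ (ψ / sqrtVec π)) := by
  ext x
  simp only [mulVec, dotProduct, discMat, of_apply, Pi.mul_apply, Pi.div_apply, sqrtVec, mul_sum]
  refine sum_congr rfl fun y _ => ?_
  rw [Real.sqrt_div (hπ x)]
  ring

theorem dirichletForm_div_sqrtVec (P : Matrix ι ι ℝ) (hπ : ∀ x, 0 < π x) (ψ : ι → ℝ) :
    dirichletForm P π (ψ / sqrtVec π) = ψ ⬝ᵥ ψ - ψ ⬝ᵥ (discMat P π *ᵥ ψ) := by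
  rw [discMat_mulVec P fun x => (hπ x).le]
  simp only [dirichletForm, dotProduct, ← sum_sub_distrib]
  refine sum_congr rfl fun x _ => ?_
  have sqrtVec_ne_zero := (sqrtVec_pos.mpr (hπ x)).ne'
  rw [Pi.mul_apply, Pi.div_apply, ← sq_sqrtVec (hπ x).le]
  field_simp

theorem varPi_div_sqrtVec (hπ : ∀ x, 0 < π x) (ψ : ι → ℝ) :
    varPi π (ψ / sqrtVec π) = ψ ⬝ᵥ ψ - (ψ ⬝ᵥ sqrtVec π) ^ 2 := by
  have sqrtVec_ne_zero (x : ι) := (sqrtVec_pos.mpr (hπ x)).ne'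
  have second_moment : ∑ x, π x * (ψ / sqrtVec π) x ^ 2 = ψ ⬝ᵥ ψ :=
    sum_congr rfl fun x _ => by
      rw [Pi.div_apply, ← sq_sqrtVec (hπ x).le]
      field_simp [sqrtVec_ne_zero x]
  have mean : ∑ x, π x * (ψ / sqrtVec π) x = ψ ⬝ᵥ sqrtVec π :=
    sum_congr rfl fun x _ => by
      rw [Pi.div_apply, ← sq_sqrtVec (hπ x).le]
      field_simp [sqrtVec_ne_zero x]
  rw [varPi, second_moment, mean]

theorem Poincare.mul_sub_sq_dotProduct_sqrtVec_le {P : Matrix ι ι ℝ} {δ : ℝ}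
    (hPI : Poincare P π δ) (hπ : ∀ x, 0 < π x) (ψ : ι → ℝ) :
    δ * (ψ ⬝ᵥ ψ - (ψ ⬝ᵥ sqrtVec π) ^ 2) ≤ ψ ⬝ᵥ ψ - ψ ⬝ᵥ (discMat P π *ᵥ ψ) := by
  simpa only [varPi_div_sqrtVec hπ, dirichletForm_div_sqrtVec P hπ] using hPI (ψ / sqrtVec π)

end

theorem stmt_2_general {X : Type*} [Fintype X] (P : Matrix X X ℝ) (π : X → ℝ)
    (hπ : ∀ x, 0 < π x) (hπ_sum : ∑ x, π x = 1) (δ : ℝ) (hδ : 0 < δ) (hPI : Poincare P π δ)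
    (ψ : X → ℝ) (hψ : ψ ⬝ᵥ ψ = 1) :
    tvDist (fun x => ψ x ^ 2) π ^ 2 ≤ (1 - ψ ⬝ᵥ (discMat P π *ᵥ ψ)) / δ := by
  have sqrtVec_unit : sqrtVec π ⬝ᵥ sqrtVec π = 1 :=
    (sqrtVec_dotProduct_self fun x => (hπ x).le).trans hπ_sum
  have tv_le : tvDist (fun x => ψ x ^ 2) π ^ 2 ≤ 1 - (ψ ⬝ᵥ sqrtVec π) ^ 2 := by
    have fidelity_bound := sq_tvDist_sq_le ψ (sqrtVec π)
    simp only [fun x => sq_sqrtVec (hπ x).le] at fidelity_bound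
    rw [hψ, sqrtVec_unit] at fidelity_bound
    linarith
  have gap := hPI.mul_sub_sq_dotProduct_sqrtVec_le hπ ψ
  rw [hψ] at gap
  exact tv_le.trans ((le_div_iff₀' hδ).mpr gap)

/-- Poincaré inequality implies the total-variation bound
`(1 - ⟨ψ|D(P)|ψ⟩)/δ ≥ TV(ψ², π)²` for every unit vector `ψ`. -/
theorem stmt_2 {X : Type*} [Fintype X] [DecidableEq X]
    (P : Matrix X X ℝ) (π : X → ℝ) (hM : IsMarkov P π) (hrev : IsReversible P π)
    (δ : ℝ) (hδ : 0 < δ) (hPI : Poincare P π δ)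
    (ψ : X → ℝ) (hψ : ∑ x, ψ x * ψ x = 1) :
    tvDist (fun x => ψ x ^ 2) π ^ 2 ≤ (1 - ∑ x, ψ x * (discMat P π).mulVec ψ x) / δ :=
  stmt_2_general P π hM.pi_pos hM.pi_sum δ hδ hPI ψ hψ
end
end

section
/- Let M = (X, P, π) be a reversible finite Markov chain satisfying a log-Sobolev inequality with constant ω ∈ (0,1), and let H : X → ℝ have minimum E* < 0 with π(E*) < 1. Fix η ∈ (0,1) and γ ∈ (0,1], and suppose H satisfies the γ spectral density condition: π({x : H(x) ≤ (1−η)E*}) ≤ π(E*)^γ. Then for every b with 0 < b < (2/3)·γ·ω·ln(1/π(E*)), the ω/2 short-path condition holds at b, i.e. the smallest eigenvalue of Π_⊥ H_b Π_⊥ is at least −1 + ω/2, where H_b = −D(P) + b·G_η and Π_⊥ = I − |√π⟩⟨√π|. -/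
open Matrix Finset

noncomputable section

variable {X : Type*} [Fintype X] [DecidableEq X]

/-!
Conjugating by `√π`, the bound on `Π_⊥ H_b Π_⊥` becomes the inequality
`ω / 2 * ∑ π f² + b * ∑ (S) π f² ≤ D(f, f)` for `f` of `π`-mean zero, where `S` is the sublevel set
`{H ≤ (1 - η) E*}` on which `G_η` is supported and `G_η ≥ -1`.

The log-Sobolev inequality is applied to `f⁺` and `f⁻` separately, as `D(f⁺) + D(f⁻) ≤ D(f)`. For
`∑ π f² = 1` the two entropies add up to `Ent(f²)` plus the binary entropy of the `L²` mass of `f⁺`.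
Splitting `Ent(f²)` along `S` and its complement gives `-ln π(S)` times the mass of `f²` on `S`,
minus the binary entropy of that mass, plus local entropies. These terms together lose at most
`1 / 4`: since `f` has mean zero, its means on `S` and on the complement have opposite signs, and on
a cell where the larger `L²` mass belongs to the sign opposite to the mean, the local entropy is
large; if there is no such cell, the sign of `f` is aligned with the cell, and its binary entropy
nearly makes up for that of the cell. Taking two thirds of this bound and one third of the Poincaré
inequality (with constant `2 ω`, from log-Sobolev to second order at `1`) leaves `ω / 2`.
-/

open InformationTheory Filter Topology

section WeightedSums

variable {ι : Type*} {A : Finset ι} {w f g : ι → ℝ}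

lemma posPart_mul_negPart_eq_zero {R : Type*} [Ring R] [LinearOrder R] [IsOrderedAddMonoid R]
    (a : R) : a⁺ * a⁻ = 0 := by
  rcases le_total 0 a with h | h
  · rw [negPart_of_nonneg h, mul_zero]
  · rw [posPart_of_nonpos h, zero_mul]

lemma sq_eq_posPart_sq_add_negPart_sq {R : Type*} [CommRing R] [LinearOrder R]
    [IsOrderedAddMonoid R] (a : R) : a ^ 2 = a⁺ ^ 2 + a⁻ ^ 2 := by
  linear_combination (-(a + (a⁺ - a⁻))) * posPart_sub_negPart a
    - 2 * posPart_mul_negPart_eq_zero a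

lemma sum_mul_sq_eq_posPart_add_negPart (A : Finset ι) (w f : ι → ℝ) :
    ∑ i ∈ A, w i * f i ^ 2 = ∑ i ∈ A, w i * (f i)⁺ ^ 2 + ∑ i ∈ A, w i * (f i)⁻ ^ 2 := by
  simp only [← sum_add_distrib, ← mul_add, ← sq_eq_posPart_sq_add_negPart_sq]

lemma sq_mul_log_sq_eq_posPart_add_negPart (a : ℝ) :
    a ^ 2 * Real.log (a ^ 2) =
      a⁺ ^ 2 * Real.log (a⁺ ^ 2) + a⁻ ^ 2 * Real.log (a⁻ ^ 2) := by
  rcases le_total 0 a with h | h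
  · simp [posPart_of_nonneg h, negPart_of_nonneg h]
  · simp [posPart_of_nonpos h, negPart_of_nonpos h]

lemma sum_mul_sq_mul_log_sq_eq_posPart_add_negPart (A : Finset ι) (w f : ι → ℝ) :
    ∑ i ∈ A, w i * (f i ^ 2 * Real.log (f i ^ 2)) =
      ∑ i ∈ A, w i * ((f i)⁺ ^ 2 * Real.log ((f i)⁺ ^ 2)) +
        ∑ i ∈ A, w i * ((f i)⁻ ^ 2 * Real.log ((f i)⁻ ^ 2)) := by
  simp only [← sum_add_distrib, ← mul_add, ← sq_mul_log_sq_eq_posPart_add_negPart]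

lemma sum_mul_sq_pos_iff (hw : ∀ i ∈ A, 0 ≤ w i) (hg : ∀ i ∈ A, 0 ≤ g i) :
    0 < ∑ i ∈ A, w i * g i ^ 2 ↔ 0 < ∑ i ∈ A, w i * g i := by
  rw [sum_pos_iff_of_nonneg fun i hi => mul_nonneg (hw i hi) (sq_nonneg _),
    sum_pos_iff_of_nonneg fun i hi => mul_nonneg (hw i hi) (hg i hi)]
  refine exists_congr fun i => and_congr_right fun hi => ?_
  rw [(mul_nonneg (hw i hi) (sq_nonneg _)).lt_iff_ne', (mul_nonneg (hw i hi) (hg i hi)).lt_iff_ne']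
  simp

lemma mul_log_add_sub_le_mul_log {x k : ℝ} (hx : 0 ≤ x) (hk : 0 < k) :
    x * Real.log k + x - k ≤ x * Real.log x := by
  rcases hx.eq_or_lt with rfl | hx
  · simpa using hk.le
  have h := mul_le_mul_of_nonneg_left (Real.log_le_sub_one_of_pos (div_pos hk hx)) hx.le
  rw [Real.log_div hk.ne' hx.ne', mul_sub, mul_sub, mul_div_cancel₀ _ hx.ne'] at h
  linarith

/-- The entropy of `g` with respect to the weights `w` on `A`, neither of which need be
normalised; for a probability weight on the whole space it is `entPi`. -/
def localEnt (A : Finset ι) (w g : ι → ℝ) : ℝ :=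
  ∑ i ∈ A, w i * (g i * Real.log (g i)) -
    (∑ i ∈ A, w i * g i) * (Real.log (∑ i ∈ A, w i * g i) - Real.log (∑ i ∈ A, w i))

lemma localEnt_nonneg (hw : ∀ i ∈ A, 0 ≤ w i) (hg : ∀ i ∈ A, 0 ≤ g i) :
    0 ≤ localEnt A w g := by
  have hwg : ∀ i ∈ A, 0 ≤ w i * g i := fun i hi => mul_nonneg (hw i hi) (hg i hi)
  rw [localEnt, sub_nonneg]
  rcases (sum_nonneg hwg).eq_or_lt with hzero | hpos
  · have hzero_at := (sum_eq_zero_iff_of_nonneg hwg).1 hzero.symm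
    rw [← hzero, zero_mul, sum_eq_zero fun i hi => by rw [← mul_assoc, hzero_at i hi, zero_mul]]
  have hW : 0 < ∑ i ∈ A, w i := (sum_nonneg hw).lt_of_ne' fun h => hpos.ne' <|
    sum_eq_zero fun i hi => by rw [(sum_eq_zero_iff_of_nonneg hw).1 h i hi, zero_mul]
  set m := (∑ i ∈ A, w i * g i) / ∑ i ∈ A, w i with hm
  calc (∑ i ∈ A, w i * g i) * (Real.log (∑ i ∈ A, w i * g i) - Real.log (∑ i ∈ A, w i))
      = ∑ i ∈ A, w i * (g i * Real.log m + g i - m) := by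
        simp only [mul_sub, mul_add, sum_sub_distrib, sum_add_distrib, ← mul_assoc, ← sum_mul]
        rw [hm, Real.log_div hpos.ne' hW.ne', mul_div_cancel₀ _ hW.ne']
        ring
    _ ≤ ∑ i ∈ A, w i * (g i * Real.log (g i)) := sum_le_sum fun i hi =>
        mul_le_mul_of_nonneg_left (mul_log_add_sub_le_mul_log (hg i hi) (div_pos hpos hW)) (hw i hi)

-- The log-sum inequality for the weights `w * g`.
lemma two_mul_sum_sq_mul_log_sub_le (hw : ∀ i ∈ A, 0 ≤ w i) (hg : ∀ i ∈ A, 0 ≤ g i) :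
    2 * ((∑ i ∈ A, w i * g i ^ 2) *
        (Real.log (∑ i ∈ A, w i * g i ^ 2) - Real.log (∑ i ∈ A, w i * g i))) ≤
      ∑ i ∈ A, w i * (g i ^ 2 * Real.log (g i ^ 2)) := by
  have h := localEnt_nonneg (w := fun i => w i * g i)
    (fun i hi => mul_nonneg (hw i hi) (hg i hi)) hg
  simp only [localEnt, mul_assoc, ← sq, sub_nonneg] at h
  calc _ ≤ 2 * ∑ i ∈ A, w i * (g i * (g i * Real.log (g i))) := by gcongr
    _ = _ := by
      rw [mul_sum]
      refine sum_congr rfl fun i _ => ?_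
      rw [Real.log_pow]
      push_cast
      ring

-- Bessel's inequality for the constant function `1` and the orthogonal pair `f`, `g`.
lemma sq_sum_div_add_sq_sum_div_le_of_mul_eq_zero (hw : ∀ i ∈ A, 0 ≤ w i)
    (hfg : ∀ i ∈ A, f i * g i = 0) :
    (∑ i ∈ A, w i * f i) ^ 2 / ∑ i ∈ A, w i * f i ^ 2 +
      (∑ i ∈ A, w i * g i) ^ 2 / ∑ i ∈ A, w i * g i ^ 2 ≤ ∑ i ∈ A, w i := by
  have hcoeff (a N : ℝ) : 2 * (a / N) * a - (a / N) ^ 2 * N = a ^ 2 / N := by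
    rcases eq_or_ne N 0 with rfl | hN
    · simp
    · field_simp
      ring
  set α := (∑ i ∈ A, w i * f i) / ∑ i ∈ A, w i * f i ^ 2
  set β := (∑ i ∈ A, w i * g i) / ∑ i ∈ A, w i * g i ^ 2
  have hresidual : 0 ≤ ∑ i ∈ A, w i * (1 - α * f i - β * g i) ^ 2 :=
    sum_nonneg fun i hi => mul_nonneg (hw i hi) (sq_nonneg _)
  rw [← hcoeff, ← hcoeff, ← sub_nonneg]
  convert hresidual using 1
  simp only [mul_sum, ← sum_sub_distrib, ← sum_add_distrib]
  refine sum_congr rfl fun i hi => ?_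
  linear_combination (-2 * α * β * w i) * hfg i hi

lemma mul_log_add_mul_log_le {p n s X Y : ℝ} (hn : 0 < n) (hnp : n ≤ p) (hX : 0 < X)
    (hXY : X ≤ Y) (hs : X / p + Y / n ≤ s) :
    p * Real.log X + n * Real.log Y ≤
      (p + n) * (Real.log s + Real.log p + Real.log n - Real.log (p + n)) := by
  have hp : 0 < p := hn.trans_le hnp
  have hY : 0 < Y := hX.trans_le hXY
  have hspos : 0 < s := (by positivity : 0 < X / p + Y / n).trans_le hs
  rw [div_add_div _ _ hp.ne' hn.ne', div_le_iff₀ (by positivity)] at hs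
  set c := s * p * n / (p + n) with hc_def
  have hc : 0 < c := by positivity
  have hlogc : Real.log c = Real.log s + Real.log p + Real.log n - Real.log (p + n) := by
    rw [hc_def, Real.log_div (by positivity) (by positivity), Real.log_mul (by positivity) hn.ne',
      Real.log_mul hspos.ne' hp.ne']
  have hlogX := Real.log_le_sub_one_of_pos (div_pos hX hc)
  have hlogY := Real.log_le_sub_one_of_pos (div_pos hY hc)
  rw [Real.log_div hX.ne' hc.ne'] at hlogX
  rw [Real.log_div hY.ne' hc.ne'] at hlogY
  -- Rearrangement: `p ≥ n` and `X ≤ Y` allow swapping the weights, `p X + n Y ≤ n X + p Y`.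
  have hswap : p * X + n * Y ≤ (p + n) * c := by
    rw [hc_def, mul_div_cancel₀ _ (by positivity)]
    nlinarith [mul_nonneg (sub_nonneg.2 hnp) (sub_nonneg.2 hXY)]
  have hlinear : p * (X / c - 1) + n * (Y / c - 1) ≤ 0 := by
    have : p * (X / c - 1) + n * (Y / c - 1) = (p * X + n * Y) / c - (p + n) := by ring
    rw [this, sub_nonpos, div_le_iff₀ hc]
    exact hswap
  rw [← hlogc]
  linarith [mul_le_mul_of_nonneg_left hlogX hp.le, mul_le_mul_of_nonneg_left hlogY hn.le]

-- Jensen bounds the entropy of `f⁺` and `f⁻` in terms of their `L¹` and `L²` masses. The `L²` mass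
-- of `f⁺` is the larger although its `L¹` mass is the smaller, and Bessel bounds the latter.
lemma sign_gain_le_localEnt (hw : ∀ i ∈ A, 0 ≤ w i) (hmean : ∑ i ∈ A, w i * f i ≤ 0)
    (hlt : ∑ i ∈ A, w i * (f i)⁻ ^ 2 < ∑ i ∈ A, w i * (f i)⁺ ^ 2) :
    0 < ∑ i ∈ A, w i * (f i)⁻ ^ 2 ∧
      (∑ i ∈ A, w i * (f i)⁺ ^ 2 - ∑ i ∈ A, w i * (f i)⁻ ^ 2) *
          Real.log ((∑ i ∈ A, w i * (f i)⁺ ^ 2) / ∑ i ∈ A, w i * (f i)⁻ ^ 2) ≤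
        localEnt A w fun i => f i ^ 2 := by
  have hpos_nonneg : ∀ i ∈ A, 0 ≤ (f i)⁺ := fun i _ => posPart_nonneg _
  have hneg_nonneg : ∀ i ∈ A, 0 ≤ (f i)⁻ := fun i _ => negPart_nonneg _
  have hbessel := sq_sum_div_add_sq_sum_div_le_of_mul_eq_zero hw
    fun i _ => posPart_mul_negPart_eq_zero (f i)
  have hjensen_pos := two_mul_sum_sq_mul_log_sub_le hw hpos_nonneg
  have hjensen_neg := two_mul_sum_sq_mul_log_sub_le hw hneg_nonneg
  have hmean_split : ∑ i ∈ A, w i * (f i)⁺ ≤ ∑ i ∈ A, w i * (f i)⁻ := by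
    rw [← sub_nonpos]
    simpa only [← sum_sub_distrib, ← mul_sub, posPart_sub_negPart] using hmean
  have hn_nonneg : 0 ≤ ∑ i ∈ A, w i * (f i)⁻ ^ 2 :=
    sum_nonneg fun i hi => mul_nonneg (hw i hi) (sq_nonneg _)
  have hpos_mean := (sum_mul_sq_pos_iff hw hpos_nonneg).1 (hn_nonneg.trans_lt hlt)
  have hneg_mean := hpos_mean.trans_le hmean_split
  have hn := (sum_mul_sq_pos_iff hw hneg_nonneg).2 hneg_mean
  refine ⟨hn, ?_⟩
  rw [localEnt, sum_mul_sq_mul_log_sq_eq_posPart_add_negPart,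
    sum_mul_sq_eq_posPart_add_negPart A w f]
  set p := ∑ i ∈ A, w i * (f i)⁺ ^ 2
  set n := ∑ i ∈ A, w i * (f i)⁻ ^ 2
  have hp : 0 < p := hn.trans hlt
  have hscalar := mul_log_add_mul_log_le hn hlt.le (pow_pos hpos_mean 2)
    (pow_le_pow_left₀ hpos_mean.le hmean_split 2) hbessel
  rw [Real.log_pow, Real.log_pow] at hscalar
  push_cast at hscalar
  rw [Real.log_div hp.ne' hn.ne']
  linarith

end WeightedSums

section BinaryEntropy

lemma binEntropy_le_binEntropy_of_le_one_sub {w a : ℝ} (hw : 0 ≤ w) (hwa : w ≤ a)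
    (haw : w ≤ 1 - a) : Real.binEntropy w ≤ Real.binEntropy a := by
  wlog ha : a ≤ 2⁻¹ generalizing a
  · rw [← Real.binEntropy_one_sub a]
    exact this haw (by linarith) (by linarith)
  · exact Real.binEntropy_strictMonoOn.monotoneOn ⟨hw, hwa.trans ha⟩ ⟨hw.trans hwa, ha⟩ hwa

lemma gibbs_two_point {x y a b : ℝ} (hx : 0 ≤ x) (hy : 0 ≤ y) (hxy : 0 < x + y) (ha : 0 < a)
    (hb : 0 < b) (hab : a + b = 1) :
    x * Real.log a + y * Real.log b + (x + y) * Real.log (x + y) ≤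
      x * Real.log x + y * Real.log y := by
  have hx' := mul_log_add_sub_le_mul_log hx (mul_pos ha hxy)
  have hy' := mul_log_add_sub_le_mul_log hy (mul_pos hb hxy)
  rw [Real.log_mul ha.ne' hxy.ne'] at hx'
  rw [Real.log_mul hb.ne' hxy.ne'] at hy'
  linear_combination hx' + hy' + (x + y) * hab

-- Tangent bounds for `log` at `w / (u + w) = 3 / 8` and `u / (u + w) = 5 / 8`.
lemma cross_entropy_swap_le {u w : ℝ} (hu : 0 < u) (hw : 0 < w) :
    u * (Real.log w - Real.log (u + w)) + w * (Real.log u - Real.log (u + w)) ≤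
      u * (Real.log (3 / 8) - 2 / 5) + w * (Real.log (5 / 8) + 2 / 3) := by
  have ht : 0 < u + w := add_pos hu hw
  have hlogw := Real.log_le_sub_one_of_pos (x := w / (3 / 8 * (u + w))) (by positivity)
  have hlogu := Real.log_le_sub_one_of_pos (x := u / (5 / 8 * (u + w))) (by positivity)
  rw [Real.log_div hw.ne' (by positivity), Real.log_mul (by norm_num) ht.ne'] at hlogw
  rw [Real.log_div hu.ne' (by positivity), Real.log_mul (by norm_num) ht.ne'] at hlogu
  have hrational : u * (w / (3 / 8 * (u + w)) - 1) + w * (u / (5 / 8 * (u + w)) - 1) ≤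
      -(2 / 5) * u + 2 / 3 * w := by
    have : u * (w / (3 / 8 * (u + w)) - 1) + w * (u / (5 / 8 * (u + w)) - 1) =
        64 / 15 * (u * w) / (u + w) - (u + w) := by field_simp; ring
    rw [this, sub_le_iff_le_add, div_le_iff₀ ht]
    nlinarith [sq_nonneg (5 * w - 3 * u)]
  linarith [mul_le_mul_of_nonneg_left hlogw hu.le, mul_le_mul_of_nonneg_left hlogu hw.le]

lemma neg_quarter_le_log_four_fifths : -(1 / 4 : ℝ) ≤ Real.log (4 / 5) := by
  have := Real.one_sub_inv_le_log_of_pos (x := (4 / 5 : ℝ)) (by norm_num)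
  norm_num at this ⊢
  exact this

lemma log_five_eighths_le : Real.log (5 / 8) ≤ -(5 / 12 : ℝ) := by
  have hfactor : Real.log (5 / 8) = Real.log (5 / 6) + Real.log (3 / 4) := by
    rw [← Real.log_mul (by norm_num) (by norm_num)]
    norm_num
  linarith [Real.log_le_sub_one_of_pos (x := (5 / 6 : ℝ)) (by norm_num),
    Real.log_le_sub_one_of_pos (x := (3 / 4 : ℝ)) (by norm_num)]

lemma log_three_eighths_le : Real.log (3 / 8) ≤ Real.log (1 / 5) + 13 / 20 := by
  have hfactor : Real.log (3 / 8) = Real.log (1 / 5) + Real.log 2 + Real.log (15 / 16) := by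
    rw [← Real.log_mul (by norm_num) (by norm_num), ← Real.log_mul (by norm_num) (by norm_num)]
    norm_num
  linarith [Real.log_le_sub_one_of_pos (x := (15 / 16 : ℝ)) (by norm_num), Real.log_two_lt_d9]

-- With `q = 1 - u - w`, the reference points `4 / 5`, `1 / 5`, `3 / 8`, `5 / 8` are chosen so that
-- each of `q`, `u`, `w` ends up with coefficient at most `1 / 4`.
lemma binEntropy_add_le {u w : ℝ} (hu : 0 < u) (hw : 0 < w) (ht : u + w ≤ 1) :
    Real.binEntropy (u + w) ≤ Real.binEntropy w + (u - w) * Real.log (u / w) + 1 / 4 := by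
  obtain ⟨q, hq⟩ : ∃ q, q = 1 - (u + w) := ⟨_, rfl⟩
  have hq0 : 0 ≤ q := by linarith
  have hgibbs := gibbs_two_point (a := 4 / 5) (b := 1 / 5) hq0 hu.le (by positivity)
    (by norm_num) (by norm_num) (by norm_num)
  have hcross := cross_entropy_swap_le hu hw
  have hlogq := mul_le_mul_of_nonneg_left neg_quarter_le_log_four_fifths hq0
  have hlogu := mul_le_mul_of_nonneg_left log_three_eighths_le hu.le
  have hlogw := mul_le_mul_of_nonneg_left log_five_eighths_le hw.le
  rw [Real.binEntropy_eq_negMulLog_add_negMulLog_one_sub,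
    Real.binEntropy_eq_negMulLog_add_negMulLog_one_sub, ← hq, show 1 - w = q + u by linarith,
    Real.log_div hu.ne' hw.ne']
  simp only [Real.negMulLog]
  linarith

lemma binEntropy_le_binEntropy_half {t : ℝ} (ht0 : 0 ≤ t) (ht1 : t ≤ 1) :
    Real.binEntropy t ≤ Real.binEntropy (t / 2) + 1 / 4 := by
  rcases ht0.eq_or_lt with rfl | ht0
  · norm_num
  · have := binEntropy_add_le (half_pos ht0) (half_pos ht0) (by linarith)
    simpa using this

-- `pᵢ` and `nᵢ` are the `L²` masses of `f⁺` and `f⁻` on cell `i`, and `δᵢ` is its local entropy.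
-- If neither gain hypothesis applies, the cells have opposite majority signs, so that the sign
-- alone carries enough entropy.
lemma binEntropy_le_of_sign_gain {p₁ n₁ p₂ n₂ δ₁ δ₂ : ℝ} (hp₁ : 0 ≤ p₁) (hn₁ : 0 ≤ n₁)
    (hp₂ : 0 ≤ p₂) (hn₂ : 0 ≤ n₂) (hsum : p₁ + n₁ + (p₂ + n₂) = 1) (hδ₁ : 0 ≤ δ₁) (hδ₂ : 0 ≤ δ₂)
    (hgain₁ : p₁ < n₁ → 0 < p₁ ∧ (n₁ - p₁) * Real.log (n₁ / p₁) ≤ δ₁)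
    (hgain₂ : n₂ < p₂ → 0 < n₂ ∧ (p₂ - n₂) * Real.log (p₂ / n₂) ≤ δ₂) :
    Real.binEntropy (p₁ + n₁) ≤ Real.binEntropy (p₁ + p₂) + δ₁ + δ₂ + 1 / 4 := by
  have hcompl : Real.binEntropy (p₂ + n₂) = Real.binEntropy (p₁ + n₁) := by
    rw [← Real.binEntropy_one_sub, ← hsum, add_sub_cancel_right]
  have hmono {w : ℝ} (hw : 0 ≤ w) (hle : w ≤ p₁ + p₂) (hle' : w ≤ n₁ + n₂) :
      Real.binEntropy w ≤ Real.binEntropy (p₁ + p₂) :=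
    binEntropy_le_binEntropy_of_le_one_sub hw hle (by linarith)
  rcases lt_or_ge n₂ p₂ with h₂ | h₂
  · obtain ⟨hn₂_pos, hgain⟩ := hgain₂ h₂
    linarith [binEntropy_add_le (hn₂_pos.trans h₂) hn₂_pos (by linarith),
      hmono hn₂ (by linarith) (by linarith)]
  rcases lt_or_ge p₁ n₁ with h₁ | h₁
  · obtain ⟨hp₁_pos, hgain⟩ := hgain₁ h₁
    rw [add_comm p₁ n₁]
    linarith [binEntropy_add_le (hp₁_pos.trans h₁) hp₁_pos (by linarith),
      hmono hp₁ (by linarith) (by linarith)]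
  rcases le_total (p₁ + p₂) (1 / 2) with hp | hp
  · linarith [binEntropy_le_binEntropy_half (t := p₁ + n₁) (by linarith) (by linarith),
      hmono (w := (p₁ + n₁) / 2) (by linarith) (by linarith) (by linarith)]
  · linarith [binEntropy_le_binEntropy_half (t := p₂ + n₂) (by linarith) (by linarith),
      hmono (w := (p₂ + n₂) / 2) (by linarith) (by linarith) (by linarith)]

end BinaryEntropy

section SignedParts

variable {ι : Type*} [Fintype ι] {w f g : ι → ℝ}

lemma entPi_posPart_sq_add_entPi_negPart_sq (hf : ∑ i, w i * f i ^ 2 = 1) :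
    entPi w (fun i => (f i)⁺ ^ 2) + entPi w (fun i => (f i)⁻ ^ 2) =
      ∑ i, w i * (f i ^ 2 * Real.log (f i ^ 2)) + Real.binEntropy (∑ i, w i * (f i)⁺ ^ 2) := by
  have hneg : ∑ i, w i * (f i)⁻ ^ 2 = 1 - ∑ i, w i * (f i)⁺ ^ 2 := by
    linarith [sum_mul_sq_eq_posPart_add_negPart univ w f]
  rw [sum_mul_sq_mul_log_sq_eq_posPart_add_negPart, entPi, entPi, hneg,
    Real.binEntropy_eq_negMulLog_add_negMulLog_one_sub, Real.negMulLog, Real.negMulLog]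
  ring

lemma localEnt_add_localEnt_compl_sub_le [DecidableEq ι] (S : Finset ι) (hw : ∀ i, 0 ≤ w i)
    (hw_sum : ∑ i, w i = 1) (hg : ∀ i, 0 ≤ g i) (hg_sum : ∑ i, w i * g i = 1) :
    localEnt S w g + localEnt Sᶜ w g - Real.binEntropy (∑ i ∈ S, w i * g i) -
        Real.log (∑ i ∈ S, w i) * ∑ i ∈ S, w i * g i ≤
      ∑ i, w i * (g i * Real.log (g i)) := by
  have hcompl : ∑ i ∈ Sᶜ, w i * g i = 1 - ∑ i ∈ S, w i * g i := by
    rw [← hg_sum, ← sum_add_sum_compl S, add_sub_cancel_left]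
  have hlog : Real.log (∑ i ∈ Sᶜ, w i) ≤ 0 :=
    Real.log_nonpos (sum_nonneg fun i _ => hw i)
      (hw_sum ▸ sum_le_univ_sum_of_nonneg hw)
  have hmul : (∑ i ∈ Sᶜ, w i * g i) * Real.log (∑ i ∈ Sᶜ, w i) ≤ 0 :=
    mul_nonpos_of_nonneg_of_nonpos (sum_nonneg fun i _ => mul_nonneg (hw i) (hg i)) hlog
  rw [← sum_add_sum_compl S, localEnt, localEnt,
    Real.binEntropy_eq_negMulLog_add_negMulLog_one_sub, Real.negMulLog, Real.negMulLog, ← hcompl]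
  linarith

lemma neg_log_mul_sub_quarter_le_of_sum_nonneg (S : Finset ι) (hw : ∀ i, 0 ≤ w i)
    (hw_sum : ∑ i, w i = 1) (hmean : ∑ i, w i * f i = 0) (hf : ∑ i, w i * f i ^ 2 = 1)
    (hS : 0 ≤ ∑ i ∈ S, w i * f i) :
    -Real.log (∑ i ∈ S, w i) * ∑ i ∈ S, w i * f i ^ 2 - 1 / 4 ≤
      entPi w (fun i => (f i)⁺ ^ 2) + entPi w (fun i => (f i)⁻ ^ 2) := by
  classical
  have hnonneg (A : Finset ι) (h : ι → ℝ) : 0 ≤ ∑ i ∈ A, w i * h i ^ 2 :=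
    sum_nonneg fun i _ => mul_nonneg (hw i) (sq_nonneg _)
  have hent_nonneg (A : Finset ι) : 0 ≤ localEnt A w fun i => f i ^ 2 :=
    localEnt_nonneg (fun i _ => hw i) fun i _ => sq_nonneg _
  have hmean_compl : ∑ i ∈ Sᶜ, w i * f i ≤ 0 := by
    linarith [sum_add_sum_compl S fun i => w i * f i]
  have hgain_compl := sign_gain_le_localEnt (fun i _ => hw i) hmean_compl
  have hgain := sign_gain_le_localEnt (A := S) (w := w) (f := fun i => -f i) (fun i _ => hw i)
    (by simpa only [mul_neg, sum_neg_distrib, neg_nonpos] using hS)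
  simp only [posPart_neg, negPart_neg, neg_sq] at hgain
  have hparts := hf
  rw [← sum_add_sum_compl S, sum_mul_sq_eq_posPart_add_negPart S,
    sum_mul_sq_eq_posPart_add_negPart Sᶜ] at hparts
  have hbin := binEntropy_le_of_sign_gain (hnonneg S fun i => (f i)⁺) (hnonneg S fun i => (f i)⁻)
    (hnonneg Sᶜ fun i => (f i)⁺) (hnonneg Sᶜ fun i => (f i)⁻) hparts (hent_nonneg S)
    (hent_nonneg Sᶜ) hgain hgain_compl
  rw [← sum_mul_sq_eq_posPart_add_negPart, sum_add_sum_compl S] at hbin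
  have hchain := localEnt_add_localEnt_compl_sub_le S hw hw_sum (fun i => sq_nonneg (f i)) hf
  rw [entPi_posPart_sq_add_entPi_negPart_sq hf]
  linarith

lemma neg_log_mul_sub_quarter_le_entPi_add_entPi (S : Finset ι) (hw : ∀ i, 0 ≤ w i)
    (hw_sum : ∑ i, w i = 1) (hmean : ∑ i, w i * f i = 0) (hf : ∑ i, w i * f i ^ 2 = 1) :
    -Real.log (∑ i ∈ S, w i) * ∑ i ∈ S, w i * f i ^ 2 - 1 / 4 ≤
      entPi w (fun i => (f i)⁺ ^ 2) + entPi w (fun i => (f i)⁻ ^ 2) := by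
  rcases le_total 0 (∑ i ∈ S, w i * f i) with hS | hS
  · exact neg_log_mul_sub_quarter_le_of_sum_nonneg S hw hw_sum hmean hf hS
  · have h := neg_log_mul_sub_quarter_le_of_sum_nonneg (f := fun i => -f i) S hw hw_sum
      (by simpa only [mul_neg, sum_neg_distrib, neg_eq_zero] using hmean)
      (by simpa only [neg_sq] using hf)
      (by simpa only [mul_neg, sum_neg_distrib, neg_nonneg] using hS)
    simpa only [posPart_neg, negPart_neg, neg_sq, add_comm] using h

end SignedParts

section EntropyExpansion

variable {ι : Type*} [Fintype ι] {w : ι → ℝ}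

lemma abs_klFun_one_add_sub_sq_div_two_le {z : ℝ} (hz : |z| ≤ 1 / 2) :
    |klFun (1 + z) - z ^ 2 / 2| ≤ 4 * |z| ^ 3 := by
  have hlog : |Real.log (1 + z) - z + z ^ 2 / 2| ≤ 2 * |z| ^ 3 := by
    have h := Real.abs_log_sub_add_sum_range_le (x := -z) (by rw [abs_neg]; linarith) 2
    rw [abs_neg, le_div_iff₀ (by linarith)] at h
    norm_num [sum_range_succ] at h
    rw [show Real.log (1 + z) - z + z ^ 2 / 2 = -z + z ^ 2 / 2 + Real.log (1 + z) by ring]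
    nlinarith [abs_nonneg (-z + z ^ 2 / 2 + Real.log (1 + z))]
  have hone_add : |1 + z| ≤ 3 / 2 := (abs_add_le _ _).trans (by rw [abs_one]; linarith)
  calc |klFun (1 + z) - z ^ 2 / 2|
      = |(1 + z) * (Real.log (1 + z) - z + z ^ 2 / 2) - z ^ 3 / 2| := by
        rw [klFun]
        ring_nf
    _ ≤ |1 + z| * |Real.log (1 + z) - z + z ^ 2 / 2| + |z| ^ 3 / 2 := by
        refine (abs_sub _ _).trans_eq ?_
        rw [abs_mul, abs_div, abs_pow, abs_two]
    _ ≤ 3 / 2 * (2 * |z| ^ 3) + |z| ^ 3 / 2 := by gcongr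
    _ ≤ 4 * |z| ^ 3 := by linarith [pow_nonneg (abs_nonneg z) 3]

lemma tendsto_klFun_one_add_mul_div_sq {c : ℝ → ℝ} (hc : ContinuousAt c 0) :
    Tendsto (fun ε => klFun (1 + ε * c ε) / ε ^ 2) (𝓝[≠] 0) (𝓝 (c 0 ^ 2 / 2)) := by
  have hc' : Tendsto c (𝓝[≠] 0) (𝓝 (c 0)) := hc.tendsto.mono_left nhdsWithin_le_nhds
  have hε : Tendsto (fun ε : ℝ => ε) (𝓝[≠] 0) (𝓝 0) := tendsto_id.mono_left nhdsWithin_le_nhds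
  have hsmall : ∀ᶠ ε in 𝓝[≠] (0 : ℝ), |ε * c ε| ≤ 1 / 2 := by
    refine (hε.mul hc').abs.eventually_le_const ?_
    norm_num
  have herror : Tendsto (fun ε => 4 * |c ε| ^ 3 * |ε|) (𝓝[≠] 0) (𝓝 0) := by
    simpa using ((hc'.abs.pow 3).const_mul 4).mul hε.abs
  have hdiff : Tendsto (fun ε => klFun (1 + ε * c ε) / ε ^ 2 - c ε ^ 2 / 2) (𝓝[≠] 0) (𝓝 0) := by
    refine squeeze_zero_norm' ?_ herror
    filter_upwards [hsmall, self_mem_nhdsWithin] with ε hle hne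
    have hε_ne : ε ≠ 0 := hne
    have hsq : 0 < ε ^ 2 := sq_pos_of_ne_zero hε_ne
    calc ‖klFun (1 + ε * c ε) / ε ^ 2 - c ε ^ 2 / 2‖
        = |klFun (1 + ε * c ε) - (ε * c ε) ^ 2 / 2| / ε ^ 2 := by
          rw [Real.norm_eq_abs, ← abs_of_pos hsq, ← abs_div, abs_of_pos hsq]
          congr 1
          field_simp
      _ ≤ 4 * |ε * c ε| ^ 3 / ε ^ 2 := by
          gcongr
          exact abs_klFun_one_add_sub_sq_div_two_le hle
      _ = 4 * |c ε| ^ 3 * |ε| := by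
          rw [abs_mul, ← sq_abs ε]
          field_simp
  simpa using hdiff.add ((hc'.pow 2).div_const 2)

lemma entPi_eq_sum_klFun_sub_klFun (hw_sum : ∑ i, w i = 1) (g : ι → ℝ) :
    entPi w g = ∑ i, w i * klFun (g i) - klFun (∑ i, w i * g i) := by
  simp only [entPi, klFun, mul_sub, mul_add, mul_one, sum_sub_distrib, sum_add_distrib, hw_sum]
  ring

lemma tendsto_entPi_one_add_mul_sq_div_sq (hw_sum : ∑ i, w i = 1) (f : ι → ℝ) :
    Tendsto (fun ε => entPi w (fun i => (1 + ε * f i) ^ 2) / ε ^ 2) (𝓝[≠] 0)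
      (𝓝 (2 * varPi w f)) := by
  have hsq (ε : ℝ) (i : ι) : (1 + ε * f i) ^ 2 = 1 + ε * (2 * f i + ε * f i ^ 2) := by ring
  have hmean (ε : ℝ) : ∑ i, w i * (1 + ε * f i) ^ 2 =
      1 + ε * ∑ i, w i * (2 * f i + ε * f i ^ 2) := by
    simp only [hsq, mul_add, mul_one, sum_add_distrib, hw_sum, mul_sum, mul_left_comm]
  have hpoint (i : ι) := (tendsto_klFun_one_add_mul_div_sq
    (c := fun ε => 2 * f i + ε * f i ^ 2) (by fun_prop)).const_mul (w i)
  have hlimit := (tendsto_finsetSum univ fun i _ => hpoint i).sub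
    (tendsto_klFun_one_add_mul_div_sq
      (c := fun ε => ∑ i, w i * (2 * f i + ε * f i ^ 2)) (by fun_prop))
  convert hlimit using 2 with ε
  · rw [entPi_eq_sum_klFun_sub_klFun hw_sum, hmean, sub_div, sum_div]
    simp only [hsq, mul_div_assoc]
  · have hfirst : ∑ i, w i * (2 * f i) = 2 * ∑ i, w i * f i := by
      rw [mul_sum]
      exact sum_congr rfl fun i _ => by ring
    have hsecond : ∑ i, w i * ((2 * f i) ^ 2 / 2) = 2 * ∑ i, w i * f i ^ 2 := by
      rw [mul_sum]
      exact sum_congr rfl fun i _ => by ring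
    simp only [zero_mul, add_zero, hfirst, hsecond, varPi]
    ring

end EntropyExpansion

section DirichletForm

variable {X : Type*} [Fintype X] {P : Matrix X X ℝ} {π : X → ℝ} {ω : ℝ}

lemma IsMarkov.mulVec_const_add_mul (hM : IsMarkov P π) (a ε : ℝ) (f : X → ℝ) (x : X) :
    (P *ᵥ fun y => a + ε * f y) x = a + ε * (P *ᵥ f) x := by
  simp only [mulVec, dotProduct, mul_add, sum_add_distrib, ← sum_mul, hM.rowSum, one_mul, mul_sum,
    mul_left_comm]

lemma IsMarkov.sum_mul_mulVec (hM : IsMarkov P π) (f : X → ℝ) :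
    ∑ x, π x * (P *ᵥ f) x = ∑ x, π x * f x := by
  have hstationary : π ᵥ* P = π := funext hM.stationary
  change π ⬝ᵥ P *ᵥ f = π ⬝ᵥ f
  rw [dotProduct_mulVec, hstationary]

lemma dirichletForm_const_add_mul (hM : IsMarkov P π) (a ε : ℝ) (f : X → ℝ) :
    dirichletForm P π (fun x => a + ε * f x) = ε ^ 2 * dirichletForm P π f := by
  have hcross : ∑ x, (π x * f x - π x * (P *ᵥ f) x) = 0 := by
    rw [sum_sub_distrib, hM.sum_mul_mulVec, sub_self]
  simp only [dirichletForm, hM.mulVec_const_add_mul]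
  rw [mul_sum, ← sub_eq_zero, ← mul_zero (a * ε), ← hcross, mul_sum, ← sum_sub_distrib]
  exact sum_congr rfl fun x _ => by ring

lemma dirichletForm_posPart_add_negPart_le (hP : ∀ x y, 0 ≤ P x y) (hπ : ∀ x, 0 ≤ π x)
    (f : X → ℝ) :
    dirichletForm P π (fun x => (f x)⁺) + dirichletForm P π (fun x => (f x)⁻) ≤
      dirichletForm P π f := by
  have hmulVec (x : X) : (P *ᵥ f) x = (P *ᵥ fun y => (f y)⁺) x - (P *ᵥ fun y => (f y)⁻) x := by
    simp only [mulVec, dotProduct, ← sum_sub_distrib, ← mul_sub, posPart_sub_negPart]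
  rw [dirichletForm, dirichletForm, dirichletForm, ← sum_add_distrib]
  refine sum_le_sum fun x _ => ?_
  rw [← mul_add]
  refine mul_le_mul_of_nonneg_left ?_ (hπ x)
  have hpos : 0 ≤ (f x)⁻ * (P *ᵥ fun y => (f y)⁺) x := mul_nonneg (negPart_nonneg _)
    (sum_nonneg fun y _ => mul_nonneg (hP x y) (posPart_nonneg _))
  have hneg : 0 ≤ (f x)⁺ * (P *ᵥ fun y => (f y)⁻) x := mul_nonneg (posPart_nonneg _)
    (sum_nonneg fun y _ => mul_nonneg (hP x y) (negPart_nonneg _))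
  rw [hmulVec]
  linear_combination hpos + hneg - sq_eq_posPart_sq_add_negPart_sq (f x) -
    ((P *ᵥ fun y => (f y)⁺) x - (P *ᵥ fun y => (f y)⁻) x) * posPart_sub_negPart (f x)

-- The second-order expansion of the log-Sobolev inequality at `1 + ε f`.
lemma LogSobolev.poincare (hM : IsMarkov P π) (hLS : LogSobolev P π ω) :
    Poincare P π (2 * ω) := by
  intro f
  have hlimit := (tendsto_entPi_one_add_mul_sq_div_sq hM.pi_sum f).const_mul ω
  rw [mul_comm 2 ω, mul_assoc]
  refine le_of_tendsto hlimit ?_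
  filter_upwards [self_mem_nhdsWithin] with ε hε
  have hsq : 0 < ε ^ 2 := sq_pos_of_ne_zero hε
  rw [← mul_div_assoc, div_le_iff₀ hsq, mul_comm _ (ε ^ 2), ← dirichletForm_const_add_mul hM 1]
  exact hLS _

lemma LogSobolev.le_dirichletForm_of_normalized (hM : IsMarkov P π) (hω : 0 ≤ ω)
    (hLS : LogSobolev P π ω) (S : Finset X) {f : X → ℝ} (hmean : ∑ x, π x * f x = 0)
    (hf : ∑ x, π x * f x ^ 2 = 1) :
    ω * (1 / 2 + 2 / 3 * (-Real.log (∑ x ∈ S, π x) * ∑ x ∈ S, π x * f x ^ 2)) ≤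
      dirichletForm P π f := by
  have hpoincare := hLS.poincare hM f
  rw [varPi, hmean, hf] at hpoincare
  have hentropy := neg_log_mul_sub_quarter_le_entPi_add_entPi S (fun x => (hM.pi_pos x).le)
    hM.pi_sum hmean hf
  -- Weights `1 / 3` on Poincaré and `2 / 3` on log-Sobolev: `1 / 2 = 1 / 3 * 2 - 2 / 3 * (1 / 4)`.
  linarith [mul_le_mul_of_nonneg_left hentropy hω, hLS fun x => (f x)⁺, hLS fun x => (f x)⁻,
    dirichletForm_posPart_add_negPart_le hM.nonneg (fun x => (hM.pi_pos x).le) f]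

lemma LogSobolev.le_dirichletForm (hM : IsMarkov P π) (hω : 0 ≤ ω) (hLS : LogSobolev P π ω)
    (S : Finset X) {f : X → ℝ} (hmean : ∑ x, π x * f x = 0) :
    ω * (1 / 2 * ∑ x, π x * f x ^ 2 +
        2 / 3 * (-Real.log (∑ x ∈ S, π x) * ∑ x ∈ S, π x * f x ^ 2)) ≤
      dirichletForm P π f := by
  have hterm (x : X) : 0 ≤ π x * f x ^ 2 := mul_nonneg (hM.pi_pos x).le (sq_nonneg _)
  rcases (sum_nonneg fun x _ => hterm x).eq_or_lt with hzero | hpos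
  · have hf (x : X) : f x = 0 := by
      have := (sum_eq_zero_iff_of_nonneg fun x _ => hterm x).1 hzero.symm x (mem_univ x)
      simpa [(hM.pi_pos x).ne'] using this
    simp [dirichletForm, hf]
  set N := ∑ x, π x * f x ^ 2
  set c := (√N)⁻¹
  have hcN : c ^ 2 * N = 1 := by
    rw [inv_pow, Real.sq_sqrt hpos.le, inv_mul_cancel₀ hpos.ne']
  have hscale (A : Finset X) : ∑ x ∈ A, π x * (0 + c * f x) ^ 2 =
      c ^ 2 * ∑ x ∈ A, π x * f x ^ 2 := by
    rw [mul_sum]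
    exact sum_congr rfl fun x _ => by ring
  have hmean_scaled : ∑ x, π x * (0 + c * f x) = 0 := by
    simp only [zero_add, mul_left_comm _ c, ← mul_sum, hmean, mul_zero]
  have h := hLS.le_dirichletForm_of_normalized hM hω S hmean_scaled ((hscale univ).trans hcN)
  rw [dirichletForm_const_add_mul hM, hscale, ← hcN] at h
  exact le_of_mul_le_mul_left (h.trans_eq' (by ring)) (by positivity)

end DirichletForm

section Hamiltonian

variable {X : Type*} [Fintype X] {P : Matrix X X ℝ} {π : X → ℝ}

lemma IsMarkov.sqrtVec_dotProduct_self (hM : IsMarkov P π) : sqrtVec π ⬝ᵥ sqrtVec π = 1 := by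
  rw [← hM.pi_sum]
  exact sum_congr rfl fun x _ => Real.mul_self_sqrt (hM.pi_pos x).le

lemma sqrtVec_mul_dotProduct_sqrtVec_mul (hπ : ∀ x, 0 ≤ π x) (f g : X → ℝ) :
    (sqrtVec π * f) ⬝ᵥ (sqrtVec π * g) = ∑ x, π x * (f x * g x) := by
  refine sum_congr rfl fun x _ => ?_
  rw [Pi.mul_apply, Pi.mul_apply, mul_mul_mul_comm, sqrtVec, Real.mul_self_sqrt (hπ x)]

lemma discMat_mulVec_sqrtVec_mul (hπ : ∀ x, 0 < π x) (f : X → ℝ) :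
    discMat P π *ᵥ (sqrtVec π * f) = sqrtVec π * (P *ᵥ f) := by
  ext x
  simp only [mulVec, dotProduct, discMat, of_apply, Pi.mul_apply, sqrtVec, mul_sum]
  refine sum_congr rfl fun y _ => ?_
  have : √(π y) ≠ 0 := (Real.sqrt_pos.2 (hπ y)).ne'
  rw [Real.sqrt_div (hπ x).le]
  field_simp

variable [DecidableEq X]

lemma dotProduct_projPerp_conj_mulVec (π v : X → ℝ) (A : Matrix X X ℝ) :
    v ⬝ᵥ (projPerp π * A * projPerp π) *ᵥ v = (projPerp π *ᵥ v) ⬝ᵥ A *ᵥ (projPerp π *ᵥ v) := by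
  have hsymm : (projPerp π)ᵀ = projPerp π := by
    rw [projPerp, transpose_sub, transpose_one, transpose_vecMulVec]
  rw [← mulVec_mulVec, ← mulVec_mulVec, dotProduct_mulVec, ← mulVec_transpose, hsymm]

lemma projPerp_mulVec (π v : X → ℝ) :
    projPerp π *ᵥ v = v - (sqrtVec π ⬝ᵥ v) • sqrtVec π := by
  rw [projPerp, sub_mulVec, one_mulVec, vecMulVec_mulVec, op_smul_eq_smul]

lemma sqrtVec_dotProduct_projPerp_mulVec (hπ : sqrtVec π ⬝ᵥ sqrtVec π = 1) (v : X → ℝ) :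
    sqrtVec π ⬝ᵥ projPerp π *ᵥ v = 0 := by
  rw [projPerp_mulVec, dotProduct_sub, dotProduct_smul, hπ, smul_eq_mul, mul_one, sub_self]

lemma projPerp_mulVec_dotProduct_self_le (hπ : sqrtVec π ⬝ᵥ sqrtVec π = 1) (v : X → ℝ) :
    (projPerp π *ᵥ v) ⬝ᵥ (projPerp π *ᵥ v) ≤ v ⬝ᵥ v := by
  simp only [projPerp_mulVec, sub_dotProduct, dotProduct_sub, smul_dotProduct, dotProduct_smul, hπ,
    smul_eq_mul, dotProduct_comm v (sqrtVec π)]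
  linarith [mul_self_nonneg (sqrtVec π ⬝ᵥ v)]

lemma shortPathHam_mulVec_sqrtVec_mul (hπ : ∀ x, 0 < π x) (b η : ℝ) (H : X → ℝ) (Estar : ℝ)
    (f : X → ℝ) :
    shortPathHam P π b η H Estar *ᵥ (sqrtVec π * f) =
      sqrtVec π * fun x => -(P *ᵥ f) x + b * gEta η (H x / |Estar|) * f x := by
  rw [shortPathHam, add_mulVec, neg_mulVec, discMat_mulVec_sqrtVec_mul hπ, smul_mulVec, GEtaMat]
  ext x
  simp only [Pi.add_apply, Pi.neg_apply, Pi.mul_apply, Pi.smul_apply, smul_eq_mul, mulVec_diagonal]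
  ring

lemma dotProduct_shortPathHam_mulVec (hπ : ∀ x, 0 < π x) (b η : ℝ) (H : X → ℝ) (Estar : ℝ)
    (f : X → ℝ) :
    (sqrtVec π * f) ⬝ᵥ shortPathHam P π b η H Estar *ᵥ (sqrtVec π * f) =
      dirichletForm P π f - ∑ x, π x * f x ^ 2 +
        b * ∑ x, π x * f x ^ 2 * gEta η (H x / |Estar|) := by
  rw [shortPathHam_mulVec_sqrtVec_mul hπ, sqrtVec_mul_dotProduct_sqrtVec_mul fun x => (hπ x).le,
    dirichletForm, mul_sum, ← sum_sub_distrib, ← sum_add_distrib]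
  exact sum_congr rfl fun x _ => by ring

lemma shortPathCond_of_le_dirichletForm (hM : IsMarkov P π) {b η Estar θ : ℝ} {H : X → ℝ}
    (hθ : θ ≤ 1)
    (h : ∀ f : X → ℝ, ∑ x, π x * f x = 0 →
      θ * ∑ x, π x * f x ^ 2 ≤
        dirichletForm P π f + b * ∑ x, π x * f x ^ 2 * gEta η (H x / |Estar|)) :
    ShortPathCond P π b η H Estar θ := by
  intro v
  have hunit := hM.sqrtVec_dotProduct_self
  have hπ (x : X) : 0 ≤ π x := (hM.pi_pos x).le
  change (-1 + θ) * (v ⬝ᵥ v) ≤ v ⬝ᵥ _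
  rw [dotProduct_projPerp_conj_mulVec]
  have hcontract := projPerp_mulVec_dotProduct_self_le hunit v
  have horth := sqrtVec_dotProduct_projPerp_mulVec hunit v
  obtain ⟨f, hf⟩ : ∃ f, projPerp π *ᵥ v = sqrtVec π * f :=
    ⟨projPerp π *ᵥ v / sqrtVec π,
      funext fun x => (mul_div_cancel₀ _ (Real.sqrt_pos.2 (hM.pi_pos x)).ne').symm⟩
  rw [hf] at hcontract horth ⊢
  have hmean : ∑ x, π x * f x = 0 := by
    have h := sqrtVec_mul_dotProduct_sqrtVec_mul hπ 1 f
    simpa only [mul_one, horth, Pi.one_apply, one_mul] using h.symm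
  have hnorm := sqrtVec_mul_dotProduct_sqrtVec_mul hπ f f
  simp only [← sq] at hnorm
  rw [dotProduct_shortPathHam_mulVec hM.pi_pos]
  rw [hnorm] at hcontract
  linarith [h f hmean, mul_le_mul_of_nonpos_left hcontract (by linarith : -1 + θ ≤ 0)]

end Hamiltonian

section SpectralDensity

variable {X : Type*} [Fintype X] {π H : X → ℝ} {Estar η : ℝ}

lemma neg_one_le_gEta {x : ℝ} (hη : 0 < η) (hx : -1 ≤ x) : -1 ≤ gEta η x := by
  refine le_min (by norm_num) ?_
  rw [le_div_iff₀ hη]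
  linarith

lemma gEta_eq_zero {x : ℝ} (hη : 0 ≤ η) (hx : η - 1 ≤ x) : gEta η x = 0 :=
  min_eq_left (div_nonneg (by linarith) hη)

lemma neg_sum_filter_le_sum_mul_gEta {w : X → ℝ} (hw : ∀ x, 0 ≤ w x) (hη : 0 < η)
    (hEstar : Estar < 0) (hH : ∀ x, Estar ≤ H x) :
    -∑ x with H x ≤ (1 - η) * Estar, w x ≤ ∑ x, w x * gEta η (H x / |Estar|) := by
  have hpos : 0 < -Estar := neg_pos.2 hEstar
  rw [abs_of_neg hEstar, sum_filter, ← sum_neg_distrib]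
  refine sum_le_sum fun x _ => ?_
  split_ifs with hx
  · rw [← mul_neg_one]
    refine mul_le_mul_of_nonneg_left (neg_one_le_gEta hη ?_) (hw x)
    rw [le_div_iff₀ hpos]
    linarith [hH x]
  · rw [gEta_eq_zero hη.le, mul_zero, neg_zero]
    rw [le_div_iff₀ hpos]
    linarith

lemma massLE_eq_sum_filter (π H : X → ℝ) (t : ℝ) : massLE π H t = ∑ x with H x ≤ t, π x := by
  simp only [massLE, Set.indicator_apply, Set.mem_ofPred_eq, sum_filter]

lemma piStar_pos (hπ : ∀ x, 0 < π x) (hE : Estar ∈ Set.range H) : 0 < piStar π H Estar := by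
  obtain ⟨x, hx⟩ := hE
  refine sum_pos' (fun y _ => Set.indicator_nonneg (fun z _ => (hπ z).le) y) ⟨x, mem_univ x, ?_⟩
  rw [Set.indicator_of_mem (by exact hx)]
  exact hπ x

lemma piStar_le_massLE (hπ : ∀ x, 0 ≤ π x) {t : ℝ} (ht : Estar ≤ t) :
    piStar π H Estar ≤ massLE π H t :=
  sum_le_sum fun x _ => Set.indicator_le_indicator_of_subset
    (fun _ (hy : H _ = Estar) => hy.trans_le ht) hπ x

lemma mul_log_one_div_piStar_le_neg_log (hπ : ∀ x, 0 < π x) (hE : Estar ∈ Set.range H) {γ t : ℝ}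
    (ht : Estar ≤ t) (hSD : massLE π H t ≤ piStar π H Estar ^ γ) :
    γ * Real.log (1 / piStar π H Estar) ≤ -Real.log (massLE π H t) := by
  have hpos := piStar_pos hπ hE
  have hlog := Real.log_le_log (hpos.trans_le (piStar_le_massLE (fun x => (hπ x).le) ht)) hSD
  rw [Real.log_rpow hpos] at hlog
  rw [one_div, Real.log_inv]
  linarith

end SpectralDensity

theorem stmt_3_general {X : Type*} [Fintype X] [DecidableEq X] {P : Matrix X X ℝ} {π : X → ℝ}
    (hM : IsMarkov P π) {ω : ℝ} (hω : ω ∈ Set.Icc (0 : ℝ) 2) (hLS : LogSobolev P π ω)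
    {H : X → ℝ} {Estar : ℝ} (hmin : IsLeast (Set.range H) Estar) (hEstar : Estar < 0)
    {η γ : ℝ} (hη : 0 < η) (hSD : massLE π H ((1 - η) * Estar) ≤ piStar π H Estar ^ γ)
    {b : ℝ} (hb₀ : 0 ≤ b) (hb : b ≤ 2 / 3 * γ * ω * Real.log (1 / piStar π H Estar)) :
    ShortPathCond P π b η H Estar (ω / 2) := by
  refine shortPathCond_of_le_dirichletForm hM (by linarith [hω.2]) fun f hmean => ?_
  have hf_nonneg (x : X) : 0 ≤ π x * f x ^ 2 := mul_nonneg (hM.pi_pos x).le (sq_nonneg _)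
  have hpotential := neg_sum_filter_le_sum_mul_gEta hf_nonneg hη hEstar
    fun x => hmin.2 (Set.mem_range_self x)
  have hlog := mul_log_one_div_piStar_le_neg_log hM.pi_pos hmin.1 (by nlinarith) hSD
  rw [massLE_eq_sum_filter] at hlog
  have hcore := hLS.le_dirichletForm hM hω.1 {x | H x ≤ (1 - η) * Estar} hmean
  set Q := ∑ x with H x ≤ (1 - η) * Estar, π x * f x ^ 2
  have hb_le : b ≤ 2 / 3 * ω * -Real.log (∑ x with H x ≤ (1 - η) * Estar, π x) := by
    linarith [mul_le_mul_of_nonneg_left hlog hω.1]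
  have hQ : 0 ≤ Q := sum_nonneg fun x _ => hf_nonneg x
  linarith [mul_le_mul_of_nonneg_left hpotential hb₀, mul_le_mul_of_nonneg_right hb_le hQ]

/-- under a log-Sobolev inequality with constant `ω` and the `γ` spectral
density condition, the `ω/2` short-path condition holds for every
`0 < b < (2/3)·γ·ω·ln(1/π(E*))`. -/
theorem stmt_3 {X : Type*} [Fintype X] [DecidableEq X]
    (P : Matrix X X ℝ) (π : X → ℝ) (hM : IsMarkov P π) (hrev : IsReversible P π)
    (ω : ℝ) (hω : ω ∈ Set.Ioo (0:ℝ) 1) (hLS : LogSobolev P π ω)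
    (H : X → ℝ) (Estar : ℝ) (hmin : IsLeast (Set.range H) Estar) (hEstar : Estar < 0)
    (hpiStar : piStar π H Estar < 1)
    (η γ : ℝ) (hη : η ∈ Set.Ioo (0:ℝ) 1) (hγ : γ ∈ Set.Ioc (0:ℝ) 1)
    (hSD : massLE π H ((1 - η) * Estar) ≤ piStar π H Estar ^ γ) :
    ∀ b : ℝ, 0 < b → b < 2 / 3 * γ * ω * Real.log (1 / piStar π H Estar) →
      ShortPathCond P π b η H Estar (ω / 2) := fun _ hb₀ hb =>
    stmt_3_general hM ⟨hω.1.le, by linarith [hω.2]⟩ hLS hmin hEstar hη.1 hSD hb₀.le hb.le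
end
end

section
/- Let M = (X, P, π) be a finite Markov chain, H : X → ℝ with minimum E* < 0, and η ∈ (0,1). (a) If there is Δ̃ ≥ 0 with Σ_y P(x,y)·H(y) ≤ H(x) + Δ̃ for all x ∈ X, then H is Δ̃-stable under M. (b) H is always sqrt(‖H‖_P)-stable under M, where ‖H‖_P = max_x Σ_y P(x,y)·(H(x)−H(y))² is the P-pseudo-Lipschitz norm. -/
open Matrix Finset

noncomputable section

variable {X : Type*} [Fintype X] [DecidableEq X]

/-!
Let `h x = g_η (x / |E*|)`. It is concave and nondecreasing, so Jensen's inequality for the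
probability weights `P x ·` gives `∑ y, P x y * h (H y) ≤ h (∑ y, P x y * H y)`, and a bound
`H x + Δ` on the mean of `H` passes through `h`. The mean of any `H` exceeds `H x` by at most the
root mean square increment from `x`, which is bounded by `√‖H‖_P`.
-/

lemma gEta_monotone {η : ℝ} (hη : 0 < η) : Monotone (gEta η) := by
  intro a b hab
  unfold gEta
  gcongr

lemma concaveOn_gEta (η : ℝ) : ConcaveOn ℝ Set.univ (gEta η) := by
  have h_affine : ConcaveOn ℝ Set.univ fun x : ℝ => (x + 1 - η) / η :=
    ⟨convex_univ, fun x _ y _ a b _ _ hab => by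
      simp only [smul_eq_mul]
      linear_combination (1 - η) / η * hab⟩
  exact (concaveOn_const 0 convex_univ).inf h_affine

lemma sum_mul_le_add_sqrt_sum_mul_sub_sq {ι : Type*} {s : Finset ι} {w : ι → ℝ}
    (hw_nonneg : ∀ i ∈ s, 0 ≤ w i) (hw_sum : ∑ i ∈ s, w i = 1) (f : ι → ℝ) (a : ℝ) :
    ∑ i ∈ s, w i * f i ≤ a + √(∑ i ∈ s, w i * (a - f i) ^ 2) := by
  have h_mean : ∑ i ∈ s, w i * (a - f i) = a - ∑ i ∈ s, w i * f i := by
    simp only [mul_sub, sum_sub_distrib, ← sum_mul, hw_sum, one_mul]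
  have h_jensen : (∑ i ∈ s, w i * (a - f i)) ^ 2 ≤ ∑ i ∈ s, w i * (a - f i) ^ 2 :=
    Real.pow_arith_mean_le_arith_mean_pow_of_even s w _ hw_nonneg hw_sum even_two
  have h_abs := Real.abs_le_sqrt h_jensen
  rw [h_mean] at h_abs
  linarith [neg_le_of_abs_le h_abs]

lemma IsMarkov.mem_rowStochastic {P : Matrix X X ℝ} {π : X → ℝ} (hM : IsMarkov P π) :
    P ∈ rowStochastic ℝ X :=
  mem_rowStochastic_iff_sum.2 ⟨hM.nonneg, hM.rowSum⟩

lemma deltaStable_of_sum_mul_le {P : Matrix X X ℝ} (hP : P ∈ rowStochastic ℝ X) {H : X → ℝ}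
    {E η Δ : ℝ} (hE : E ≠ 0) (hη : 0 < η) (h_drift : ∀ x, ∑ y, P x y * H y ≤ H x + Δ) :
    DeltaStable P H E η Δ := by
  intro x
  calc ∑ y, P x y * gEta η (H y / |E|)
      ≤ gEta η (∑ y, P x y * (H y / |E|)) :=
        (concaveOn_gEta η).le_map_sum (fun _ _ => nonneg_of_mem_rowStochastic hP)
          (sum_row_of_mem_rowStochastic hP x) fun _ _ => Set.mem_univ _
    _ = gEta η ((∑ y, P x y * H y) / |E|) := by
        simp only [sum_div, mul_div_assoc]
    _ ≤ gEta η ((H x + Δ) / |E|) :=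
        gEta_monotone hη ((div_le_div_iff_of_pos_right (abs_pos.2 hE)).2 (h_drift x))

lemma sum_mul_sub_sq_le_pseudoLipNorm {Y : Type*} [Fintype Y] [Nonempty Y]
    (P : Matrix Y Y ℝ) (H : Y → ℝ) (x : Y) :
    ∑ y, P x y * (H x - H y) ^ 2 ≤ pseudoLipNorm P H :=
  le_sup' (fun x => ∑ y, P x y * (H x - H y) ^ 2) (mem_univ x)

lemma sum_mul_le_add_sqrt_pseudoLipNorm [Nonempty X] {P : Matrix X X ℝ}
    (hP : P ∈ rowStochastic ℝ X) (H : X → ℝ) (x : X) :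
    ∑ y, P x y * H y ≤ H x + √(pseudoLipNorm P H) :=
  calc ∑ y, P x y * H y
      ≤ H x + √(∑ y, P x y * (H x - H y) ^ 2) :=
        sum_mul_le_add_sqrt_sum_mul_sub_sq (fun _ _ => nonneg_of_mem_rowStochastic hP)
          (sum_row_of_mem_rowStochastic hP x) H (H x)
    _ ≤ H x + √(pseudoLipNorm P H) := by
        gcongr
        exact sum_mul_sub_sq_le_pseudoLipNorm P H x

theorem stmt_8_general [Nonempty X] {P : Matrix X X ℝ} (hP : P ∈ rowStochastic ℝ X)
    (H : X → ℝ) {E η : ℝ} (hE : E ≠ 0) (hη : 0 < η) :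
    (∀ Δ : ℝ, (∀ x, ∑ y, P x y * H y ≤ H x + Δ) → DeltaStable P H E η Δ) ∧
    DeltaStable P H E η √(pseudoLipNorm P H) :=
  ⟨fun _ => deltaStable_of_sum_mul_le hP hE hη,
    deltaStable_of_sum_mul_le hP hE hη (sum_mul_le_add_sqrt_pseudoLipNorm hP H)⟩

/-- upper bounds on the stability constant. (a) If
`Σ_y P x y · H y ≤ H x + Δ̃` for all `x` then `H` is `Δ̃`-stable; (b) `H` is always
`sqrt(‖H‖_P)`-stable. -/
theorem stmt_8 {X : Type*} [Fintype X] [DecidableEq X] [Nonempty X]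
    (P : Matrix X X ℝ) (π : X → ℝ) (hM : IsMarkov P π)
    (H : X → ℝ) (Estar : ℝ) (hmin : IsLeast (Set.range H) Estar) (hEstar : Estar < 0)
    (η : ℝ) (hη : η ∈ Set.Ioo (0:ℝ) 1) :
    (∀ Δt : ℝ, 0 ≤ Δt → (∀ x, ∑ y, P x y * H y ≤ H x + Δt) →
      DeltaStable P H Estar η Δt) ∧
    DeltaStable P H Estar η (Real.sqrt (pseudoLipNorm P H)) := by
  obtain ⟨h_drift, h_lip⟩ := stmt_8_general hM.mem_rowStochastic H hEstar.ne hη.1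
  exact ⟨fun Δt _ => h_drift Δt, h_lip⟩
end
end

section
/- Let M = (X, P, π) be a reversible finite Markov chain, H : X → ℝ with minimum E* < 0, η ∈ (0,1), b ∈ (0,1), and α ∈ (0,1), and suppose the pair (M, H) is α-subdepolarizing. Set f(x) = −g_η(−x), A = D(P), and B = b·F, where F is the diagonal matrix with entries f(H(z)/E*). Let z* ∈ X satisfy H(z*) = E*. Then for every T ∈ ℕ and all nonnegative integers c_0, c_1, …, c_T: ⟨√π| A·B^{c_T} · A·B^{c_{T−1}} ⋯ A·B^{c_1} · A·B^{c_0} |z*⟩ ≥ sqrt(π(z*)) · b^{c_0+⋯+c_T} · ∏_{j=0}^{T} f((1−α)^j)^{c_j}. -/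
open Matrix Finset

noncomputable section

variable {X : Type*} [Fintype X] [DecidableEq X]

/-!
Detailed balance says that `diag √π` intertwines `D(P)` with `Pᵀ`, while it commutes with every
diagonal matrix. Moving it through the alternating product turns the overlap at `z` into `√(π z)`
times an iterated weighted average `w₀ · P (w₁ · P (w₂ ⋯ P 1))` evaluated at `z`. Each application
of `P` contracts the arguments of all the weights collected so far by the factor `1 - α`, because
the subdepolarizing inequality applies to arbitrary finite products. The latest weight enters with
coefficient `1`, which the open interval in that inequality excludes; continuity of `f` covers it.
-/

section Subdepolarizing

variable {S : Type*} [Fintype S] {P : Matrix S S ℝ} {f : ℝ → ℝ} {h : S → ℝ} {α : ℝ}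

/-- The `α`-subdepolarizing inequality for an arbitrary profile `f` and an arbitrary observable `h`.
The property `Subdepolarizing` is the case `f = fEta η` and `h = H / E*`. -/
def SubdepolarizingWith (f : ℝ → ℝ) (P : Matrix S S ℝ) (h : S → ℝ) (α : ℝ) : Prop :=
  ∀ (T : ℕ) (a : Fin T → ℝ), (∀ t, a t ∈ Set.Ioo 0 1) →
    ∀ x, ∏ t, f (a t * ((1 - α) * h x)) ≤ ∑ y, P x y * ∏ t, f (a t * h y)

lemma Subdepolarizing.subdepolarizingWith {H : S → ℝ} {Estar η : ℝ}
    (hsub : Subdepolarizing P H Estar η α) :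
    SubdepolarizingWith (fEta η) P (fun x => H x / Estar) α := by
  simpa only [Subdepolarizing, SubdepolarizingWith, mul_assoc, mul_div_assoc] using hsub

namespace SubdepolarizingWith

variable {ι : Type*} [Fintype ι]

lemma prod_le_sum_of_mem_Ioo (hsub : SubdepolarizingWith f P h α) {a : ι → ℝ}
    (ha : ∀ i, a i ∈ Set.Ioo 0 1) (x : S) :
    ∏ i, f (a i * ((1 - α) * h x)) ≤ ∑ y, P x y * ∏ i, f (a i * h y) := by
  let e := (Fintype.equivFin ι).symm
  have hprod (r : ℝ) : ∏ t, f (a (e t) * r) = ∏ i, f (a i * r) := e.prod_comp fun i => f (a i * r)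
  simpa only [hprod] using hsub _ (fun t => a (e t)) (fun t => ha (e t)) x

lemma prod_le_sum_of_mem_Ioc (hsub : SubdepolarizingWith f P h α) (hf : Continuous f) {a : ι → ℝ}
    (ha : ∀ i, a i ∈ Set.Ioc 0 1) (x : S) :
    ∏ i, f (a i * ((1 - α) * h x)) ≤ ∑ y, P x y * ∏ i, f (a i * h y) := by
  have hscaled : ∀ s ∈ Set.Ioo (0 : ℝ) 1,
      ∏ i, f (s * a i * ((1 - α) * h x)) ≤ ∑ y, P x y * ∏ i, f (s * a i * h y) := fun s hs =>
    hsub.prod_le_sum_of_mem_Ioo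
      (fun i => ⟨mul_pos hs.1 (ha i).1, mul_lt_one_of_nonneg_of_lt_one_left hs.1.le hs.2 (ha i).2⟩)
      x
  have hone : (1 : ℝ) ∈ closure (Set.Ioo 0 1) := by simp [closure_Ioo]
  simpa only [one_mul] using
    le_on_closure hscaled (Continuous.continuousOn (by fun_prop))
      (Continuous.continuousOn (by fun_prop)) hone

lemma prod_pow_le_sum (hsub : SubdepolarizingWith f P h α) (hf : Continuous f) {a : ι → ℝ}
    (ha : ∀ i, a i ∈ Set.Ioc 0 1) (c : ι → ℕ) (x : S) :
    ∏ i, f (a i * ((1 - α) * h x)) ^ c i ≤ ∑ y, P x y * ∏ i, f (a i * h y) ^ c i := by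
  simpa [Fintype.prod_sigma] using
    hsub.prod_le_sum_of_mem_Ioc hf (ι := Σ i, Fin (c i)) (fun p => ha p.1) x

end SubdepolarizingWith

end Subdepolarizing

section FeynmanKac

variable {S : Type*} [Fintype S] {P : Matrix S S ℝ}

/-- The Feynman–Kac average `w₀ · P (w₁ · P (⋯ w_{T-1} · P 1))`. For a stochastic `P` it is the
expectation of `∏ j, w_j (x_j)` along a trajectory of the chain, as a function of its start `x_0`.
-/
def feynmanKac (P : Matrix S S ℝ) : {T : ℕ} → (Fin T → S → ℝ) → S → ℝ
  | 0, _ => 1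
  | _ + 1, w => w 0 * P *ᵥ feynmanKac P (Fin.tail w)

lemma pow_sum_mul_prod_pow_le_feynmanKac {f : ℝ → ℝ} {h : S → ℝ} {b α : ℝ}
    (hP : ∀ x y, 0 ≤ P x y) (hf : Continuous f) (hf₀ : ∀ r, 0 ≤ f r) (hb : 0 ≤ b)
    (hα : α ∈ Set.Ico 0 1) (hsub : SubdepolarizingWith f P h α) {T : ℕ} (c : Fin T → ℕ) (x : S) :
    b ^ (∑ j, c j) * ∏ j : Fin T, f ((1 - α) ^ (j : ℕ) * h x) ^ c j ≤
      feynmanKac P (fun j y => (b * f (h y)) ^ c j) x := by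
  induction T generalizing x with
  | zero => simp [feynmanKac]
  | succ T ih =>
    have hcoeff (j : Fin T) : (1 - α) ^ (j : ℕ) ∈ Set.Ioc 0 1 :=
      ⟨pow_pos (sub_pos.2 hα.2) _, pow_le_one₀ (sub_nonneg.2 hα.2.le) (sub_le_self 1 hα.1)⟩
    calc
      _ = (b * f (h x)) ^ c 0 * (b ^ (∑ j : Fin T, c j.succ) *
            ∏ j : Fin T, f ((1 - α) ^ (j : ℕ) * ((1 - α) * h x)) ^ c j.succ) := by
          simp only [Fin.sum_univ_succ, Fin.prod_univ_succ, Fin.val_zero, Fin.val_succ, pow_zero,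
            one_mul, pow_succ, pow_add, mul_pow, mul_assoc]
          ring
      _ ≤ (b * f (h x)) ^ c 0 * (b ^ (∑ j : Fin T, c j.succ) *
            ∑ y, P x y * ∏ j : Fin T, f ((1 - α) ^ (j : ℕ) * h y) ^ c j.succ) := by
          have := hf₀ (h x)
          gcongr
          exact hsub.prod_pow_le_sum hf hcoeff (fun j => c j.succ) x
      _ = (b * f (h x)) ^ c 0 * ∑ y, P x y * (b ^ (∑ j : Fin T, c j.succ) *
            ∏ j : Fin T, f ((1 - α) ^ (j : ℕ) * h y) ^ c j.succ) := by
          simp only [Finset.mul_sum, mul_left_comm]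
      _ ≤ (b * f (h x)) ^ c 0 *
            ∑ y, P x y * feynmanKac P (fun (j : Fin T) y => (b * f (h y)) ^ c j.succ) y := by
          have := hf₀ (h x)
          gcongr with y
          · exact hP x y
          · exact ih (fun j => c j.succ) y

end FeynmanKac

section Discriminant

variable {S : Type*} {P : Matrix S S ℝ} {π : S → ℝ}

lemma sqrtVec_mul_discMat_apply (hπ : ∀ x, 0 < π x) (hrev : IsReversible P π) (x y : S) :
    sqrtVec π x * discMat P π x y = sqrtVec π y * P y x := by
  have hy : √(π y) ≠ 0 := (Real.sqrt_pos.2 (hπ y)).ne'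
  calc
    √(π x) * (√(π x / π y) * P x y) = √(π x) ^ 2 * P x y / √(π y) := by
      rw [Real.sqrt_div (hπ x).le]
      ring
    _ = √(π y) ^ 2 * P y x / √(π y) := by
      rw [Real.sq_sqrt (hπ x).le, Real.sq_sqrt (hπ y).le, hrev x y]
    _ = √(π y) * P y x := by field_simp

variable [Fintype S] [DecidableEq S]

lemma sqrtVec_mul_vecMul_discMat_mul_diagonal (hπ : ∀ x, 0 < π x) (hrev : IsReversible P π)
    (u w : S → ℝ) :
    (sqrtVec π * u) ᵥ* (discMat P π * diagonal w) = sqrtVec π * (w * P *ᵥ u) := by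
  ext y
  rw [← vecMul_vecMul, vecMul_diagonal]
  simp only [vecMul, mulVec, dotProduct, Pi.mul_apply, mul_right_comm _ (u _),
    sqrtVec_mul_discMat_apply hπ hrev, Finset.mul_sum, Finset.sum_mul]
  exact Finset.sum_congr rfl fun x _ => by ring

lemma sqrtVec_vecMul_prod_discMat_mul_diagonal (hπ : ∀ x, 0 < π x) (hrev : IsReversible P π)
    {T : ℕ} (w : Fin T → S → ℝ) :
    sqrtVec π ᵥ* (List.ofFn fun j => discMat P π * diagonal (w j)).reverse.prod =
      sqrtVec π * feynmanKac P w := by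
  induction T with
  | zero => simp [feynmanKac]
  | succ T ih =>
    rw [List.ofFn_succ, List.reverse_cons, List.prod_append, List.prod_singleton, ← vecMul_vecMul,
      ih, sqrtVec_mul_vecMul_discMat_mul_diagonal hπ hrev]
    rfl

end Discriminant

lemma fEta_nonneg (η x : ℝ) : 0 ≤ fEta η x :=
  neg_nonneg.2 (min_le_left _ _)

lemma continuous_fEta (η : ℝ) : Continuous (fEta η) := by
  unfold fEta gEta
  fun_prop

theorem stmt_10_general {S : Type*} [Fintype S] [DecidableEq S] {P : Matrix S S ℝ} {π : S → ℝ}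
    (hP : ∀ x y, 0 ≤ P x y) (hπ : ∀ x, 0 < π x) (hrev : IsReversible P π)
    {f : ℝ → ℝ} (hf : Continuous f) (hf₀ : ∀ r, 0 ≤ f r) {b α : ℝ} (hb : 0 ≤ b)
    (hα : α ∈ Set.Ico 0 1) {h : S → ℝ} (hsub : SubdepolarizingWith f P h α) (z : S)
    {T : ℕ} (c : Fin T → ℕ) :
    √(π z) * b ^ (∑ j, c j) * ∏ j : Fin T, f ((1 - α) ^ (j : ℕ) * h z) ^ c j ≤
      (sqrtVec π ᵥ* (List.ofFn fun j =>
        discMat P π * (b • diagonal fun x => f (h x)) ^ c j).reverse.prod) z := by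
  have hpow (n : ℕ) :
      (b • diagonal fun x => f (h x)) ^ n = diagonal fun x => (b * f (h x)) ^ n := by
    rw [← diagonal_smul, diagonal_pow]
    rfl
  simp only [hpow]
  rw [sqrtVec_vecMul_prod_discMat_mul_diagonal hπ hrev, mul_assoc]
  exact mul_le_mul_of_nonneg_left
    (pow_sum_mul_prod_pow_le_feynmanKac hP hf hf₀ hb hα hsub c z) (Real.sqrt_nonneg _)

/-- overlap lower bound for alternating products. With `A = D(P)` and
`B = b·F` (`F` diagonal with entries `f(H z / E*)`), for an optimal `z*`,
`⟨√π| A·B^{c_T} ⋯ A·B^{c_0} |z*⟩ ≥ √(π z*) · b^{Σ c_j} · ∏_j f((1-α)^j)^{c_j}`. -/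
theorem stmt_10 {X : Type*} [Fintype X] [DecidableEq X]
    (P : Matrix X X ℝ) (π : X → ℝ) (hM : IsMarkov P π) (hrev : IsReversible P π)
    (H : X → ℝ) (Estar : ℝ) (hmin : IsLeast (Set.range H) Estar) (hEstar : Estar < 0)
    (η b α : ℝ) (hη : η ∈ Set.Ioo (0:ℝ) 1) (hb : b ∈ Set.Ioo (0:ℝ) 1)
    (hα : α ∈ Set.Ioo (0:ℝ) 1)
    (hsub : Subdepolarizing P H Estar η α)
    (zstar : X) (hz : H zstar = Estar)
    (T : ℕ) (c : Fin (T + 1) → ℕ) :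
    Real.sqrt (π zstar) * b ^ (∑ j, c j) *
        ∏ j : Fin (T + 1), fEta η ((1 - α) ^ (j : ℕ)) ^ (c j)
      ≤ ∑ x, sqrtVec π x *
          ((List.ofFn fun j : Fin (T + 1) =>
              discMat P π *
                (b • Matrix.diagonal fun z => fEta η (H z / Estar)) ^ (c j)).reverse.prod)
            x zstar := by
  simpa only [hz, div_self hEstar.ne, mul_one, vecMul, dotProduct] using
    stmt_10_general hM.nonneg hM.pi_pos hrev (continuous_fEta η) (fEta_nonneg η) hb.1.le
      ⟨hα.1.le, hα.2⟩ hsub.subdepolarizingWith zstar c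
end
end

section
/- Let M = (X, P, π) be a reversible finite Markov chain satisfying a log-Sobolev inequality with constant ω > 0, and let H : X → ℝ have ‖H‖_P > 0, minimum E* < 0, and 0 < π(E*) < 1. Fix η ∈ (0,1) with E_π[H] ≥ (1−η)E*. Then P_{x∼π}[H(x) ≤ (1−η)E*] ≤ π(E*)^γ with γ = ω·(E_π[H] − (1−η)E*)² / (‖H‖_P · ln(1/π(E*))). -/
open Matrix Finset

noncomputable section

variable {X : Type*} [Fintype X] [DecidableEq X]

/-!
This is the Herbst argument. Applied to `exp (-β H / 2)`, the log-Sobolev inequality bounds the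
entropy of `exp (-β H)` by `‖H‖_P β² / (4 ω)` times its mean `Z(β)`: the Dirichlet form of an
exponential `exp g` is a sum over pairs of states, and `(e^u - e^v)² ≤ (u - v)² (e^(2u) + e^(2v))`
together with reversibility reduces it to `‖g‖_P E_π[exp (2 g)]`. Since that entropy is
`β Z'(β) - Z(β) ln Z(β)`, the bound says that `ln Z(β) / β - ‖H‖_P β / (4 ω)` is nonincreasing;
its limit at `0` is `-E_π[H]`. A Chernoff bound, optimised over `β`, gives the Gaussian tail
`P_π[H ≤ t] ≤ exp (-ω (E_π[H] - t)² / ‖H‖_P)`.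
-/

section Herbst

open Real (exp log)

lemma sq_exp_sub_exp_le (u v : ℝ) :
    (exp u - exp v) ^ 2 ≤ (u - v) ^ 2 * (exp u ^ 2 + exp v ^ 2) := by
  wlog h : v ≤ u generalizing u v
  · linarith [this v u (le_of_not_ge h), sub_sq_comm (exp u) (exp v), sub_sq_comm u v]
  have tangent : exp u - exp v ≤ (u - v) * exp u := by
    have hv : exp v = exp (v - u) * exp u := by rw [← Real.exp_add, sub_add_cancel]
    have := mul_le_mul_of_nonneg_right (Real.add_one_le_exp (v - u)) (Real.exp_pos u).le
    linarith
  calc (exp u - exp v) ^ 2 ≤ ((u - v) * exp u) ^ 2 :=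
        pow_le_pow_left₀ (sub_nonneg.2 (Real.exp_le_exp.2 h)) tangent 2
    _ = (u - v) ^ 2 * exp u ^ 2 := mul_pow _ _ _
    _ ≤ (u - v) ^ 2 * (exp u ^ 2 + exp v ^ 2) := by
        gcongr
        exact le_add_of_nonneg_right (sq_nonneg _)

/-- If `β ↦ K β / β - c * β` is nonincreasing, it is at most its limit `K' 0` at `0`. -/
lemma le_mul_deriv_zero_add_of_mul_deriv_sub_le {K : ℝ → ℝ} {c β : ℝ}
    (hK : ∀ s, 0 ≤ s → DifferentiableAt ℝ K s) (hK0 : K 0 = 0)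
    (h : ∀ s, 0 < s → s * deriv K s - K s ≤ c * s ^ 2) (hβ : 0 ≤ β) :
    K β ≤ β * deriv K 0 + c * β ^ 2 := by
  have hslope : ∀ s, s ≠ 0 → dslope K 0 s = K s / s := fun s hs => by
    rw [dslope_of_ne K hs, slope_def_field, hK0, sub_zero, sub_zero]
  have hcont : ContinuousOn (fun s => dslope K 0 s - c * s) (Set.Ici 0) := by
    refine ContinuousOn.sub (fun s hs => ContinuousAt.continuousWithinAt ?_) (by fun_prop)
    rcases eq_or_ne s 0 with rfl | hs0
    · exact continuousAt_dslope_same.2 (hK 0 le_rfl)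
    · exact (continuousAt_dslope_of_ne hs0).2 (hK s hs).continuousAt
  have hderiv : ∀ s ∈ interior (Set.Ici (0 : ℝ)),
      HasDerivWithinAt (fun s => dslope K 0 s - c * s)
        ((deriv K s * s - K s * 1) / s ^ 2 - c) (interior (Set.Ici 0)) s := by
    rw [interior_Ici]
    intro s hs
    have hquot := ((hK s hs.le).hasDerivAt.div (hasDerivAt_id' s) hs.ne').sub
      (hasDerivAt_const_mul c)
    refine hquot.hasDerivWithinAt.congr_of_mem (fun r hr => ?_) hs
    simp only [hslope r hr.ne', Pi.sub_apply, Pi.div_apply]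
  have hanti : AntitoneOn (fun s => dslope K 0 s - c * s) (Set.Ici 0) := by
    refine antitoneOn_of_hasDerivWithinAt_nonpos (convex_Ici 0) hcont hderiv ?_
    rw [interior_Ici]
    intro s hs
    rw [sub_nonpos, div_le_iff₀ (pow_pos hs 2)]
    linarith [h s hs]
  rcases hβ.eq_or_lt with rfl | hβ
  · simp [hK0]
  have hle : K β / β - c * β ≤ deriv K 0 := by
    simpa [hslope β hβ.ne'] using hanti Set.self_mem_Ici hβ.le hβ.le
  rw [sub_le_iff_le_add, div_le_iff₀ hβ] at hle
  linarith

lemma rpow_div_mul_log_one_div {p : ℝ} (hp : p ∈ Set.Ioo 0 1) (a b : ℝ) :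
    p ^ (a / (b * log (1 / p))) = exp (-(a / b)) := by
  have hlog : log p ≠ 0 := (Real.log_neg hp.1 hp.2).ne
  rw [Real.rpow_def_of_pos hp.1, one_div, Real.log_inv, ← div_div]
  congr 1
  field_simp

variable {S : Type*} [Fintype S] {P : Matrix S S ℝ} {π H : S → ℝ}

lemma IsMarkov.dirichletForm_eq_sum_sq_sub (hM : IsMarkov P π) (f : S → ℝ) :
    dirichletForm P π f = (∑ x, ∑ y, π x * P x y * (f x - f y) ^ 2) / 2 := by
  have hleft : ∑ x, ∑ y, π x * P x y * f x ^ 2 = ∑ x, π x * f x ^ 2 := by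
    simp only [← sum_mul, ← mul_sum, hM.rowSum, mul_one]
  have hright : ∑ x, ∑ y, π x * P x y * f y ^ 2 = ∑ x, π x * f x ^ 2 := by
    rw [sum_comm]
    simp only [← sum_mul, hM.stationary]
  have hcross : dirichletForm P π f =
      ∑ x, π x * f x ^ 2 - ∑ x, ∑ y, π x * P x y * (f x * f y) := by
    simp only [dirichletForm, Matrix.mulVec, dotProduct, mul_sub, mul_sum, sum_sub_distrib]
    congr 1
    · exact sum_congr rfl fun x _ => by ring
    · exact sum_congr rfl fun x _ => sum_congr rfl fun y _ => by ring
  have hexpand : ∑ x, ∑ y, π x * P x y * (f x - f y) ^ 2 =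
      ∑ x, ∑ y, π x * P x y * f x ^ 2 + ∑ x, ∑ y, π x * P x y * f y ^ 2
        - 2 * ∑ x, ∑ y, π x * P x y * (f x * f y) := by
    simp only [mul_sum, ← sum_add_distrib, ← sum_sub_distrib]
    exact sum_congr rfl fun x _ => sum_congr rfl fun y _ => by ring
  rw [hexpand, hleft, hright, hcross]
  ring

lemma IsReversible.sum_sum_swap (hrev : IsReversible P π) (F : S → S → ℝ) :
    ∑ x, ∑ y, π x * P x y * F y x = ∑ x, ∑ y, π x * P x y * F x y := by
  rw [sum_comm]
  exact sum_congr rfl fun x _ => sum_congr rfl fun y _ => by rw [hrev y x]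

lemma sum_mul_sq_sub_le_pseudoLipNorm [Nonempty S] (P : Matrix S S ℝ) (g : S → ℝ) (x : S) :
    ∑ y, P x y * (g x - g y) ^ 2 ≤ pseudoLipNorm P g :=
  le_sup' (fun x => ∑ y, P x y * (g x - g y) ^ 2) (mem_univ x)

lemma pseudoLipNorm_const_mul [Nonempty S] (P : Matrix S S ℝ) (c : ℝ) (g : S → ℝ) :
    pseudoLipNorm P (fun x => c * g x) = c ^ 2 * pseudoLipNorm P g := by
  simp only [pseudoLipNorm]
  rw [mul₀_sup' (sq_nonneg c)]
  simp only [← mul_sub, mul_pow, mul_sum, mul_left_comm (c ^ 2)]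

lemma IsMarkov.dirichletForm_exp_le [Nonempty S] (hM : IsMarkov P π) (hrev : IsReversible P π)
    (g : S → ℝ) :
    dirichletForm P π (fun x => exp (g x)) ≤ pseudoLipNorm P g * ∑ x, π x * exp (g x) ^ 2 := by
  have hpair : ∑ x, ∑ y, π x * P x y * (exp (g x) - exp (g y)) ^ 2 ≤
      ∑ x, ∑ y, π x * P x y * ((g x - g y) ^ 2 * exp (g x) ^ 2) +
        ∑ x, ∑ y, π x * P x y * ((g y - g x) ^ 2 * exp (g y) ^ 2) := by
    simp only [← sum_add_distrib, ← mul_add]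
    refine sum_le_sum fun x _ => sum_le_sum fun y _ => ?_
    refine mul_le_mul_of_nonneg_left ?_ (mul_nonneg (hM.pi_pos x).le (hM.nonneg x y))
    rw [sub_sq_comm (g y), ← mul_add]
    exact sq_exp_sub_exp_le (g x) (g y)
  calc dirichletForm P π (fun x => exp (g x))
      = (∑ x, ∑ y, π x * P x y * (exp (g x) - exp (g y)) ^ 2) / 2 :=
        hM.dirichletForm_eq_sum_sq_sub _
    _ ≤ ∑ x, ∑ y, π x * P x y * ((g x - g y) ^ 2 * exp (g x) ^ 2) := by
        rw [hrev.sum_sum_swap fun x y => (g x - g y) ^ 2 * exp (g x) ^ 2] at hpair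
        linarith
    _ = ∑ x, (∑ y, P x y * (g x - g y) ^ 2) * (π x * exp (g x) ^ 2) := by
        simp only [sum_mul]
        exact sum_congr rfl fun x _ => sum_congr rfl fun y _ => by ring
    _ ≤ ∑ x, pseudoLipNorm P g * (π x * exp (g x) ^ 2) := by
        refine sum_le_sum fun x _ => mul_le_mul_of_nonneg_right
          (sum_mul_sq_sub_le_pseudoLipNorm P g x) ?_
        exact mul_nonneg (hM.pi_pos x).le (sq_nonneg _)
    _ = pseudoLipNorm P g * ∑ x, π x * exp (g x) ^ 2 := (mul_sum _ _ _).symm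

lemma LogSobolev.mul_entPi_exp_le [Nonempty S] {ω : ℝ} (hLS : LogSobolev P π ω)
    (hM : IsMarkov P π) (hrev : IsReversible P π) (g : S → ℝ) :
    ω * entPi π (fun x => exp (g x)) ≤ pseudoLipNorm P g / 4 * ∑ x, π x * exp (g x) := by
  have hsq : ∀ x, exp (1 / 2 * g x) ^ 2 = exp (g x) := fun x => by
    rw [← Real.exp_nat_mul]
    congr 1
    push_cast
    ring
  have h := (hLS _).trans (hM.dirichletForm_exp_le hrev fun x => 1 / 2 * g x)
  simp only [hsq, pseudoLipNorm_const_mul] at h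
  linarith

/-- The partition function `Z(β) = E_π[exp (-β H)]`, at inverse temperature `β`, of the energy `H`
relative to `π`; its values at `β ≥ 0` control the lower tail of `H`. -/
def partitionFunction (π H : S → ℝ) (β : ℝ) : ℝ :=
  ∑ x, π x * exp (-(β * H x))

lemma partitionFunction_zero (π H : S → ℝ) : partitionFunction π H 0 = ∑ x, π x := by
  simp [partitionFunction]

lemma partitionFunction_pos [Nonempty S] (hπ : ∀ x, 0 < π x) (H : S → ℝ) (β : ℝ) :
    0 < partitionFunction π H β :=
  sum_pos (fun x _ => mul_pos (hπ x) (Real.exp_pos _)) univ_nonempty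

lemma hasDerivAt_partitionFunction (π H : S → ℝ) (β : ℝ) :
    HasDerivAt (partitionFunction π H) (∑ x, π x * (exp (-(β * H x)) * -H x)) β :=
  HasDerivAt.fun_sum fun x _ => ((hasDerivAt_mul_const (H x)).fun_neg.exp).const_mul (π x)

lemma entPi_exp_neg_mul (π H : S → ℝ) (β : ℝ) :
    entPi π (fun x => exp (-(β * H x))) =
      β * deriv (partitionFunction π H) β -
        partitionFunction π H β * log (partitionFunction π H β) := by
  rw [(hasDerivAt_partitionFunction π H β).deriv]
  simp only [entPi, partitionFunction, Real.log_exp, mul_sum]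
  congr 1
  exact sum_congr rfl fun x _ => by ring

lemma massLE_le_exp_mul_partitionFunction (hπ : ∀ x, 0 ≤ π x) (H : S → ℝ) (t : ℝ) {β : ℝ}
    (hβ : 0 ≤ β) : massLE π H t ≤ exp (β * t) * partitionFunction π H β := by
  rw [massLE, partitionFunction, mul_sum]
  refine sum_le_sum fun x _ => Set.indicator_apply_le' (fun hx => ?_) fun _ => ?_
  · rw [mul_left_comm, ← Real.exp_add]
    refine le_mul_of_one_le_right (hπ x) (Real.one_le_exp ?_)
    have hβx : β * H x ≤ β * t := mul_le_mul_of_nonneg_left hx hβ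
    linarith
  · exact mul_nonneg (Real.exp_pos _).le (mul_nonneg (hπ x) (Real.exp_pos _).le)

lemma partitionFunction_le_exp_of_entPi_le [Nonempty S] (hπ : ∀ x, 0 < π x) (hsum : ∑ x, π x = 1)
    {c : ℝ} (hent : ∀ s, 0 < s →
      entPi π (fun x => exp (-(s * H x))) ≤ c * s ^ 2 * partitionFunction π H s)
    {β : ℝ} (hβ : 0 ≤ β) :
    partitionFunction π H β ≤ exp (c * β ^ 2 - β * ∑ x, π x * H x) := by
  have hpos := partitionFunction_pos hπ H
  have hderiv : ∀ s, HasDerivAt (fun s => log (partitionFunction π H s))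
      (deriv (partitionFunction π H) s / partitionFunction π H s) s := fun s =>
    (hasDerivAt_partitionFunction π H s).differentiableAt.hasDerivAt.log (hpos s).ne'
  have hzero : deriv (fun s => log (partitionFunction π H s)) 0 = -∑ x, π x * H x := by
    rw [(hderiv 0).deriv, partitionFunction_zero, hsum, (hasDerivAt_partitionFunction π H 0).deriv]
    simp
  have hgrowth : ∀ s, 0 < s → s * deriv (fun s => log (partitionFunction π H s)) s -
      log (partitionFunction π H s) ≤ c * s ^ 2 := fun s hs => by
    have h := hent s hs
    rw [entPi_exp_neg_mul, ← div_le_iff₀ (hpos s), sub_div, mul_div_assoc,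
      mul_div_cancel_left₀ _ (hpos s).ne'] at h
    rwa [(hderiv s).deriv]
  have hlog := le_mul_deriv_zero_add_of_mul_deriv_sub_le
    (fun s _ => (hderiv s).differentiableAt) (by simp [partitionFunction_zero, hsum]) hgrowth hβ
  rw [← Real.log_le_iff_le_exp (hpos β)]
  rw [hzero] at hlog
  linarith

lemma LogSobolev.partitionFunction_le_exp [Nonempty S] {ω : ℝ} (hLS : LogSobolev P π ω)
    (hω : 0 < ω) (hM : IsMarkov P π) (hrev : IsReversible P π) (H : S → ℝ) {β : ℝ} (hβ : 0 ≤ β) :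
    partitionFunction π H β ≤
      exp (pseudoLipNorm P H / (4 * ω) * β ^ 2 - β * ∑ x, π x * H x) := by
  refine partitionFunction_le_exp_of_entPi_le hM.pi_pos hM.pi_sum (fun s _ => ?_) hβ
  have h := hLS.mul_entPi_exp_le hM hrev fun x => -s * H x
  rw [pseudoLipNorm_const_mul, mul_comm, ← le_div_iff₀ hω] at h
  simp only [neg_mul] at h
  refine h.trans_eq ?_
  rw [partitionFunction]
  field_simp

lemma LogSobolev.massLE_le_exp [Nonempty S] {ω : ℝ} (hLS : LogSobolev P π ω) (hω : 0 < ω)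
    (hM : IsMarkov P π) (hrev : IsReversible P π) (hLip : 0 < pseudoLipNorm P H) {t : ℝ}
    (ht : t ≤ ∑ x, π x * H x) :
    massLE π H t ≤ exp (-(ω * ((∑ x, π x * H x) - t) ^ 2 / pseudoLipNorm P H)) := by
  -- The minimiser of the Chernoff exponent `β t + ‖H‖_P β² / (4 ω) - β E_π[H]`.
  set β := 2 * ω * ((∑ x, π x * H x) - t) / pseudoLipNorm P H with hβ_def
  have hβ : 0 ≤ β := div_nonneg (mul_nonneg (by positivity) (sub_nonneg.2 ht)) hLip.le
  calc massLE π H t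
      ≤ exp (β * t) * partitionFunction π H β :=
        massLE_le_exp_mul_partitionFunction (fun x => (hM.pi_pos x).le) H t hβ
    _ ≤ exp (β * t) * exp (pseudoLipNorm P H / (4 * ω) * β ^ 2 - β * ∑ x, π x * H x) := by
        gcongr
        exact hLS.partitionFunction_le_exp hω hM hrev H hβ
    _ = exp (-(ω * ((∑ x, π x * H x) - t) ^ 2 / pseudoLipNorm P H)) := by
        rw [← Real.exp_add, hβ_def]
        congr 1
        field_simp
        ring

theorem stmt_11_general [Nonempty S] (hM : IsMarkov P π) (hrev : IsReversible P π)
    {ω : ℝ} (hω : 0 < ω) (hLS : LogSobolev P π ω) (hLip : 0 < pseudoLipNorm P H)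
    {p : ℝ} (hp : p ∈ Set.Ioo 0 1) {t : ℝ} (ht : t ≤ ∑ x, π x * H x) :
    massLE π H t ≤
      p ^ (ω * ((∑ x, π x * H x) - t) ^ 2 / (pseudoLipNorm P H * log (1 / p))) := by
  rw [rpow_div_mul_log_one_div hp]
  exact hLS.massLE_le_exp hω hM hrev hLip ht

end Herbst

/-- Herbst argument corollary. Under a log-Sobolev inequality with
constant `ω`, `P_{x∼π}[H ≤ (1-η)E*] ≤ π(E*)^γ` with
`γ = ω·(E_π[H] - (1-η)E*)²/(‖H‖_P · ln(1/π(E*)))`. -/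
theorem stmt_11 {X : Type*} [Fintype X] [DecidableEq X] [Nonempty X]
    (P : Matrix X X ℝ) (π : X → ℝ) (hM : IsMarkov P π) (hrev : IsReversible P π)
    (ω : ℝ) (hω : 0 < ω) (hLS : LogSobolev P π ω)
    (H : X → ℝ) (hLip : 0 < pseudoLipNorm P H)
    (Estar : ℝ) (hmin : IsLeast (Set.range H) Estar) (hEstar : Estar < 0)
    (hps : piStar π H Estar ∈ Set.Ioo (0:ℝ) 1)
    (η : ℝ) (hη : η ∈ Set.Ioo (0:ℝ) 1)
    (hmean : (1 - η) * Estar ≤ ∑ x, π x * H x) :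
    massLE π H ((1 - η) * Estar) ≤
      piStar π H Estar ^
        (ω * ((∑ x, π x * H x) - (1 - η) * Estar) ^ 2 /
          (pseudoLipNorm P H * Real.log (1 / piStar π H Estar))) :=
  stmt_11_general hM hrev hω hLS hLip hps hmean
end
end

section
/- Let G be a graph on vertex set [n] with edge indicators e_{ij} ∈ {0,1}, let 1 ≤ k ≤ n−1, and for x ∈ {−1,1}^n with exactly k coordinates equal to +1 define H(x) = −Σ_{i<j} e_{ij}·(1−x_i x_j)/2. Let P be the transposition walk on weight-k strings: from x, choose uniformly one of the k(n−k) pairs (i,j) with x_i = +1 and x_j = −1 and swap them. Then for every such x: E_{y∼P(x,·)}[H(y)] − H(x) = cut(x)·(n−2)/(k(n−k)) − (2/k)·A(x) − (2/(n−k))·B(x), where cut(x) is the number of edges of G whose endpoints have opposite signs in x, A(x) is the number of edges with both endpoints +1, and B(x) is the number of edges with both endpoints −1. In particular, E_{y∼P(x,·)}[H(y)] ≤ H(x) + C*_k·(n−2)/(k(n−k)), where C*_k = max{cut(z) : z ∈ {−1,1}^n, |z| = k} is the maximum weight-k cut of G. -/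
open Finset
open scoped Classical

noncomputable section

/-- The MaxCut-Hamming cost: minus the number of cut edges
`H(z) = -Σ_{i<j} e i j (1 - z i z j)/2`. -/
def cutHam {n : ℕ} (e : Fin n → Fin n → ℝ) (z : Fin n → ℝ) : ℝ :=
  -∑ i, ∑ j, if i < j then e i j * (1 - z i * z j) / 2 else 0

/-- Swap the values of coordinates `i` and `j`. -/
def swapCoords {n : ℕ} (z : Fin n → ℝ) (i j : Fin n) : Fin n → ℝ :=
  Function.update (Function.update z i (z j)) j (z i)

/-- Expected cost after one step of the transposition walk from `z`: a uniformly random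
pair `(i,j)` with `z i = +1`, `z j = -1` is chosen (there are `k(n-k)` of them) and
swapped. -/
def transpExp {n : ℕ} (k : ℕ) (e : Fin n → Fin n → ℝ) (z : Fin n → ℝ) : ℝ :=
  (1 / ((k : ℝ) * ((n : ℝ) - (k : ℝ)))) *
    ∑ i ∈ univ.filter (fun i => z i = 1), ∑ j ∈ univ.filter (fun j => z j = -1),
      cutHam e (swapCoords z i j)

/-- Number (weighted by indicators `e`) of edges cut by `z`. -/
def cutCount {n : ℕ} (e : Fin n → Fin n → ℝ) (z : Fin n → ℝ) : ℝ :=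
  ∑ i, ∑ j, if i < j ∧ z i ≠ z j then e i j else 0

/-- Number of edges with both endpoints equal to `+1`. -/
def samePlus {n : ℕ} (e : Fin n → Fin n → ℝ) (z : Fin n → ℝ) : ℝ :=
  ∑ i, ∑ j, if i < j ∧ z i = 1 ∧ z j = 1 then e i j else 0

/-- Number of edges with both endpoints equal to `-1`. -/
def sameMinus {n : ℕ} (e : Fin n → Fin n → ℝ) (z : Fin n → ℝ) : ℝ :=
  ∑ i, ∑ j, if i < j ∧ z i = -1 ∧ z j = -1 then e i j else 0

/-!
Swapping the values at `i` and `j` adds a multiple of `δ_i - δ_j` to `z`. For `a ≠ b` the product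
of the new values at `a` and `b` is therefore polynomial in these indicators, and averaging over the
swaps replaces each indicator by `(1 ± z_a)/2`. An edge `ab` is thus cut by
`pm·[cut] - (p + m - 2)·[cut] + 2m·[both +1] + 2p·[both -1]` of the `pm` possible swaps, where `p`
and `m` count the coordinates `+1` and `-1`. Summing over edges gives the drift.
-/

/-- The coordinates at which `z` is `+1`; an abbreviation, so that it unifies with the filter in
`transpExp`. -/
abbrev plusSites {n : ℕ} (z : Fin n → ℝ) : Finset (Fin n) := univ.filter fun i => z i = 1

/-- The coordinates at which `z` is `-1`; an abbreviation, so that it unifies with the filter in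
`transpExp`. -/
abbrev minusSites {n : ℕ} (z : Fin n → ℝ) : Finset (Fin n) := univ.filter fun i => z i = -1

section Swap

variable {n : ℕ} {z : Fin n → ℝ} {a b : Fin n}

theorem swapCoords_apply (z : Fin n → ℝ) (i j a : Fin n) :
    swapCoords z i j a =
      z a + (z j - z i) * ((if a = i then 1 else 0) - (if a = j then 1 else 0)) := by
  unfold swapCoords
  rcases eq_or_ne a j with rfl | haj
  · rcases eq_or_ne a i with rfl | hai <;> simp [*]
  · rcases eq_or_ne a i with rfl | hai <;> simp [*]

theorem swapCoords_mul_swapCoords (z : Fin n → ℝ) (i j : Fin n) (hab : a ≠ b) :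
    swapCoords z i j a * swapCoords z i j b =
      z a * z b
        + (z j - z i) * (z a * ((if b = i then 1 else 0) - (if b = j then 1 else 0))
          + z b * ((if a = i then 1 else 0) - (if a = j then 1 else 0)))
        - (z j - z i) ^ 2 * ((if a = i then 1 else 0) * (if b = j then 1 else 0)
          + (if b = i then 1 else 0) * (if a = j then 1 else 0)) := by
  have not_both (c : Fin n) : (if a = c then (1 : ℝ) else 0) * (if b = c then 1 else 0) = 0 := by
    rcases eq_or_ne a c with rfl | hac
    · simp [hab.symm]
    · simp [hac]
  rw [swapCoords_apply, swapCoords_apply]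
  linear_combination (z j - z i) ^ 2 * (not_both i + not_both j)

theorem sum_plusSites_indicator (ha : z a = 1 ∨ z a = -1) :
    ∑ i ∈ plusSites z, (if a = i then (1 : ℝ) else 0) = (1 + z a) / 2 := by
  rcases ha with ha | ha <;> norm_num [ha]

theorem sum_minusSites_indicator (ha : z a = 1 ∨ z a = -1) :
    ∑ j ∈ minusSites z, (if a = j then (1 : ℝ) else 0) = (1 - z a) / 2 := by
  rcases ha with ha | ha <;> norm_num [ha]

theorem sum_swapCoords_mul_swapCoords (hab : a ≠ b)
    (ha : z a = 1 ∨ z a = -1) (hb : z b = 1 ∨ z b = -1) :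
    ∑ i ∈ plusSites z, ∑ j ∈ minusSites z, swapCoords z i j a * swapCoords z i j b =
      (#(plusSites z) * #(minusSites z) - 2 * (#(plusSites z) + #(minusSites z)) + 2) * (z a * z b)
        + (#(plusSites z) - #(minusSites z)) * (z a + z b) - 2 := by
  have expand : ∀ i ∈ plusSites z, ∀ j ∈ minusSites z,
      swapCoords z i j a * swapCoords z i j b =
        z a * z b
          - 2 * (z a * ((if b = i then 1 else 0) - (if b = j then 1 else 0))
            + z b * ((if a = i then 1 else 0) - (if a = j then 1 else 0)))
          - 4 * ((if a = i then 1 else 0) * (if b = j then 1 else 0)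
            + (if b = i then 1 else 0) * (if a = j then 1 else 0)) := by
    intro i hi j hj
    rw [swapCoords_mul_swapCoords z i j hab, (mem_filter.mp hi).2, (mem_filter.mp hj).2]
    ring
  rw [sum_congr rfl fun i hi => sum_congr rfl (expand i hi)]
  simp only [sum_add_distrib, sum_sub_distrib, ← mul_sum, ← sum_mul, sum_const, nsmul_eq_mul,
    sum_plusSites_indicator ha, sum_plusSites_indicator hb, sum_minusSites_indicator ha,
    sum_minusSites_indicator hb]
  ring

theorem sum_swapCoords_cut_indicator (hab : a ≠ b)
    (ha : z a = 1 ∨ z a = -1) (hb : z b = 1 ∨ z b = -1) :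
    ∑ i ∈ plusSites z, ∑ j ∈ minusSites z, (1 - swapCoords z i j a * swapCoords z i j b) / 2 =
      (#(plusSites z) * #(minusSites z) - (#(plusSites z) + #(minusSites z) - 2))
          * (if z a ≠ z b then 1 else 0)
        + 2 * #(minusSites z) * (if z a = 1 ∧ z b = 1 then 1 else 0)
        + 2 * #(plusSites z) * (if z a = -1 ∧ z b = -1 then 1 else 0) := by
  simp only [← sum_div, sum_sub_distrib, sum_const, nsmul_eq_mul,
    sum_swapCoords_mul_swapCoords hab ha hb]
  rcases ha with ha | ha <;> rcases hb with hb | hb <;> norm_num [ha, hb] <;> ring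

end Swap

section Drift

variable {n : ℕ} {e : Fin n → Fin n → ℝ} {z : Fin n → ℝ}

theorem card_plusSites_add_card_minusSites (hz : ∀ i, z i = 1 ∨ z i = -1) :
    #(plusSites z) + #(minusSites z) = n := by
  have not_plus_iff (i : Fin n) : ¬z i = 1 ↔ z i = -1 := by
    rcases hz i with hi | hi <;> norm_num [hi]
  simpa only [not_plus_iff, card_univ, Fintype.card_fin] using
    card_filter_add_card_filter_not (s := (univ : Finset (Fin n))) (fun i => z i = 1)

theorem cutHam_eq_neg_cutCount (e : Fin n → Fin n → ℝ) (hz : ∀ i, z i = 1 ∨ z i = -1) :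
    cutHam e z = -cutCount e z := by
  unfold cutHam cutCount
  refine congrArg Neg.neg (sum_congr rfl fun a _ => sum_congr rfl fun b _ => ?_)
  rcases hz a with ha | ha <;> rcases hz b with hb | hb <;> norm_num [ha, hb]

theorem sum_cutHam_swapCoords (e : Fin n → Fin n → ℝ) (hz : ∀ i, z i = 1 ∨ z i = -1) :
    ∑ i ∈ plusSites z, ∑ j ∈ minusSites z, cutHam e (swapCoords z i j) =
      -((#(plusSites z) * #(minusSites z) - (#(plusSites z) + #(minusSites z) - 2)) * cutCount e z
        + 2 * #(minusSites z) * samePlus e z + 2 * #(plusSites z) * sameMinus e z) := by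
  unfold cutHam cutCount samePlus sameMinus
  simp only [sum_neg_distrib, mul_sum, ← sum_add_distrib]
  rw [sum_comm_cycle]
  refine congrArg Neg.neg (sum_congr rfl fun a _ => ?_)
  rw [sum_comm_cycle]
  refine sum_congr rfl fun b _ => ?_
  by_cases hab : a < b
  · simp only [hab, if_true, true_and, mul_div_assoc, ← mul_sum]
    rw [sum_swapCoords_cut_indicator hab.ne (hz a) (hz b)]
    split_ifs <;> ring
  · simp [hab]

theorem transpExp_sub_cutHam {k : ℕ} (hk1 : 1 ≤ k) (hk2 : k < n) (e : Fin n → Fin n → ℝ)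
    (hz : ∀ i, z i = 1 ∨ z i = -1) (hzk : #(plusSites z) = k) :
    transpExp k e z - cutHam e z =
      cutCount e z * ((n : ℝ) - 2) / ((k : ℝ) * ((n : ℝ) - (k : ℝ)))
        - 2 / (k : ℝ) * samePlus e z
        - 2 / ((n : ℝ) - (k : ℝ)) * sameMinus e z := by
  have card_minus : (#(minusSites z) : ℝ) = n - k := by
    rw [eq_sub_iff_add_eq', ← hzk]
    exact_mod_cast card_plusSites_add_card_minusSites hz
  have k_ne_zero : (k : ℝ) ≠ 0 := Nat.cast_ne_zero.mpr (by lia)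
  have n_sub_k_ne_zero : (n : ℝ) - k ≠ 0 := (sub_pos.mpr (Nat.cast_lt.mpr hk2)).ne'
  rw [transpExp, sum_cutHam_swapCoords e hz, cutHam_eq_neg_cutCount e hz, hzk, card_minus]
  field_simp
  ring

theorem samePlus_nonneg (he : ∀ i j, i < j → 0 ≤ e i j) (z : Fin n → ℝ) : 0 ≤ samePlus e z :=
  sum_nonneg fun i _ => sum_nonneg fun j _ => by
    split_ifs with h
    exacts [he i j h.1, le_rfl]

theorem sameMinus_nonneg (he : ∀ i j, i < j → 0 ≤ e i j) (z : Fin n → ℝ) : 0 ≤ sameMinus e z :=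
  sum_nonneg fun i _ => sum_nonneg fun j _ => by
    split_ifs with h
    exacts [he i j h.1, le_rfl]

theorem transpExp_le {k : ℕ} (hk1 : 1 ≤ k) (hk2 : k < n) (he : ∀ i j, i < j → 0 ≤ e i j)
    (hz : ∀ i, z i = 1 ∨ z i = -1) (hzk : #(plusSites z) = k) :
    transpExp k e z ≤
      cutHam e z + cutCount e z * ((n : ℝ) - 2) / ((k : ℝ) * ((n : ℝ) - (k : ℝ))) := by
  have k_lt_n : (k : ℝ) < n := Nat.cast_lt.mpr hk2
  have plus_loss : 0 ≤ 2 / (k : ℝ) * samePlus e z :=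
    mul_nonneg (by positivity) (samePlus_nonneg he z)
  have minus_loss : 0 ≤ 2 / ((n : ℝ) - k) * sameMinus e z :=
    mul_nonneg (by positivity) (sameMinus_nonneg he z)
  linarith [transpExp_sub_cutHam hk1 hk2 e hz hzk]

end Drift

theorem stmt_14_general {n : ℕ} (k : ℕ) (hk1 : 1 ≤ k) (hk2 : k < n)
    (e : Fin n → Fin n → ℝ) (x : Fin n → ℝ) (hx : ∀ i, x i = 1 ∨ x i = -1)
    (hxk : #(plusSites x) = k) :
    transpExp k e x - cutHam e x =
        cutCount e x * ((n : ℝ) - 2) / ((k : ℝ) * ((n : ℝ) - (k : ℝ)))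
          - 2 / (k : ℝ) * samePlus e x
          - 2 / ((n : ℝ) - (k : ℝ)) * sameMinus e x ∧
    ((∀ i j, i < j → 0 ≤ e i j) → ∀ Cstar : ℝ,
      (∀ z : Fin n → ℝ, (∀ i, z i = 1 ∨ z i = -1) → #(plusSites z) = k → cutCount e z ≤ Cstar) →
      transpExp k e x ≤
        cutHam e x + Cstar * ((n : ℝ) - 2) / ((k : ℝ) * ((n : ℝ) - (k : ℝ)))) := by
  refine ⟨transpExp_sub_cutHam hk1 hk2 e hx hxk, fun he Cstar hC => ?_⟩
  have two_le : (2 : ℝ) ≤ n := by exact_mod_cast (by omega : 2 ≤ n)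
  have k_lt_n : (k : ℝ) < n := Nat.cast_lt.mpr hk2
  calc
    transpExp k e x ≤ cutHam e x + cutCount e x * ((n : ℝ) - 2) / ((k : ℝ) * ((n : ℝ) - k)) :=
      transpExp_le hk1 hk2 he hx hxk
    _ ≤ cutHam e x + Cstar * ((n : ℝ) - 2) / ((k : ℝ) * ((n : ℝ) - k)) := by
      gcongr _ + ?_ * _ / _
      exact hC x hx hxk

/-- exact drift formula for the transposition walk on the MaxCut-Hamming
cost function, and the resulting upper bound via the maximum weight-`k` cut `C*_k`. -/
theorem stmt_14 {n : ℕ} (k : ℕ) (hn : 2 ≤ n) (hk1 : 1 ≤ k) (hk2 : k < n)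
    (e : Fin n → Fin n → ℝ) (he : ∀ i j, e i j = 0 ∨ e i j = 1)
    (x : Fin n → ℝ) (hx : ∀ i, x i = 1 ∨ x i = -1)
    (hxk : (univ.filter fun i => x i = 1).card = k) :
    transpExp k e x - cutHam e x =
        cutCount e x * ((n : ℝ) - 2) / ((k : ℝ) * ((n : ℝ) - (k : ℝ)))
          - 2 / (k : ℝ) * samePlus e x
          - 2 / ((n : ℝ) - (k : ℝ)) * sameMinus e x ∧
    ∀ Cstar : ℝ,
      (∀ z : Fin n → ℝ, (∀ i, z i = 1 ∨ z i = -1) →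
        (univ.filter fun i => z i = 1).card = k → cutCount e z ≤ Cstar) →
      transpExp k e x ≤
        cutHam e x + Cstar * ((n : ℝ) - 2) / ((k : ℝ) * ((n : ℝ) - (k : ℝ))) := by
  have he_nonneg (i j : Fin n) (_ : i < j) : 0 ≤ e i j := by rcases he i j with h | h <;> simp [h]
  exact (stmt_14_general k hk1 hk2 e x hx hxk).imp_right fun bound => bound he_nonneg
end
end
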